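/- arXiv:1711.02916 — 2 statements merged into one kernel-verified Lean document; each statement's English description precedes it below -/
import Mathlib

section
/- There exist μ > 0 and n₀ ∈ ℕ such that for every n ≥ n₀ the following holds: if G is a Dirac bipartite graph on 2n vertices, then for every μn-bounded edge colouring χ of G there exists a perfect matching of G that is rainbow with respect to χ. -/
namespace RB
section
open Classical Finset

/-- Finite lopsided local lemma (counting version). -/
theorem lll {Ω I : Type} (U : Finset Ω) (hU : U.Nonempty) (Ev : I → Ω → Prop) (J : Finset I)
    (Γ : I → Finset I) (p : ℝ) (hp0 : 0 ≤ p) (hp : p ≤ 1 / 4)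
    (hΓ : ∀ i ∈ J, 4 * p * ((Γ i ∩ J).card : ℝ) ≤ 1)
    (h : ∀ i ∈ J, ∀ S ⊆ J, Disjoint S (Γ i) →
      ((U.filter (fun M => (∀ j ∈ S, ¬ Ev j M) ∧ Ev i M)).card : ℝ)
        ≤ p * (U.filter (fun M => ∀ j ∈ S, ¬ Ev j M)).card) :
    ∃ M ∈ U, ∀ j ∈ J, ¬ Ev j M := by
  have claim : ∀ k : ℕ, ∀ S ⊆ J, S.card = k → ∀ i ∈ J,
      ((U.filter (fun M => (∀ j ∈ S, ¬ Ev j M) ∧ Ev i M)).card : ℝ)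
        ≤ 2 * p * (U.filter (fun M => ∀ j ∈ S, ¬ Ev j M)).card := by
    intro k
    induction k using Nat.strong_induction_on with
    | _ k ih =>
      intro S hS hk i hi
      set S2 := S \ Γ i with hS2
      set S1 := S ∩ Γ i with hS1
      have hS2S : S2 ⊆ S := sdiff_subset
      have h2 := h i hi S2 (hS2S.trans hS) (by
        rw [hS2]; exact sdiff_disjoint)
      have hmono : ((U.filter (fun M => (∀ j ∈ S, ¬ Ev j M) ∧ Ev i M)).card : ℝ) ≤
          (U.filter (fun M => (∀ j ∈ S2, ¬ Ev j M) ∧ Ev i M)).card := by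
        exact_mod_cast card_le_card (fun M hM => by
          simp only [mem_filter] at hM ⊢
          exact ⟨hM.1, fun j hj => hM.2.1 j (hS2S hj), hM.2.2⟩)
      have hsub : U.filter (fun M => ∀ j ∈ S2, ¬ Ev j M) ⊆
          U.filter (fun M => ∀ j ∈ S, ¬ Ev j M) ∪
          S1.biUnion (fun j => U.filter (fun M => (∀ j ∈ S2, ¬ Ev j M) ∧ Ev j M)) := by
        intro M hM
        simp only [mem_filter, mem_union, mem_biUnion] at hM ⊢
        by_cases hh : ∀ j ∈ S, ¬ Ev j M
        · exact Or.inl ⟨hM.1, hh⟩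
        · push Not at hh
          obtain ⟨j, hj, hjM⟩ := hh
          refine Or.inr ⟨j, ?_, hM.1, hM.2, hjM⟩
          by_contra hc
          refine hM.2 j ?_ hjM
          rw [hS2, mem_sdiff]
          refine ⟨hj, fun hg => hc ?_⟩
          rw [hS1, mem_inter]; exact ⟨hj, hg⟩
      have hN : ((U.filter (fun M => ∀ j ∈ S2, ¬ Ev j M)).card : ℝ) ≤
          (U.filter (fun M => ∀ j ∈ S, ¬ Ev j M)).card +
          ∑ j ∈ S1, ((U.filter (fun M => (∀ j ∈ S2, ¬ Ev j M) ∧ Ev j M)).card : ℝ) := by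
        have := (card_le_card hsub).trans ((card_union_le _ _).trans
          (Nat.add_le_add_left card_biUnion_le _))
        exact_mod_cast this
      have hsum : ∑ j ∈ S1, ((U.filter (fun M => (∀ j ∈ S2, ¬ Ev j M) ∧ Ev j M)).card : ℝ) ≤
          ∑ j ∈ S1, (2 * p * (U.filter (fun M => ∀ j ∈ S2, ¬ Ev j M)).card) := by
        refine sum_le_sum (fun j hj => ?_)
        have hj' : j ∈ S ∧ j ∈ Γ i := by rwa [hS1, mem_inter] at hj
        refine ih S2.card ?_ S2 (hS2S.trans hS) rfl j (hS hj'.1)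
        rw [← hk]
        refine card_lt_card ⟨hS2S, fun hcon => ?_⟩
        have := hcon hj'.1
        rw [hS2, mem_sdiff] at this
        exact this.2 hj'.2
      rw [sum_const, nsmul_eq_mul] at hsum
      have hS1c : (S1.card : ℝ) ≤ ((Γ i ∩ J).card : ℝ) := by
        exact_mod_cast card_le_card (fun j hj => by
          rw [hS1, mem_inter] at hj
          exact mem_inter.2 ⟨hj.2, hS hj.1⟩)
      have h4 := hΓ i hi
      have h5 : 4 * p * (S1.card : ℝ) ≤ 1 :=
        (mul_le_mul_of_nonneg_left hS1c (by positivity)).trans h4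
      set a := ((U.filter (fun M => ∀ j ∈ S2, ¬ Ev j M)).card : ℝ)
      set b := ((U.filter (fun M => ∀ j ∈ S, ¬ Ev j M)).card : ℝ)
      have ha : 0 ≤ a := Nat.cast_nonneg _
      have h6 : 4 * p * (S1.card : ℝ) * a ≤ 1 * a := mul_le_mul_of_nonneg_right h5 ha
      have h7 : a ≤ 2 * b := by nlinarith
      have h8 : p * a ≤ p * (2 * b) := mul_le_mul_of_nonneg_left h7 hp0
      linarith
  have pos : ∀ S : Finset I, S ⊆ J → (0:ℝ) < (U.filter (fun M => ∀ j ∈ S, ¬ Ev j M)).card := by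
    intro S
    induction S using Finset.induction_on with
    | empty => intro _; simpa using hU
    | insert i S hi ih =>
      intro hS
      have hSJ : S ⊆ J := (subset_insert _ _).trans hS
      have h1 := ih hSJ
      have h2 := claim S.card S hSJ rfl i (hS (mem_insert_self _ _))
      have h3 : ((U.filter (fun M => ∀ j ∈ S, ¬ Ev j M)).card : ℝ) ≤
          (U.filter (fun M => ∀ j ∈ insert i S, ¬ Ev j M)).card +
          (U.filter (fun M => (∀ j ∈ S, ¬ Ev j M) ∧ Ev i M)).card := by
        have : U.filter (fun M => ∀ j ∈ S, ¬ Ev j M) ⊆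
          U.filter (fun M => ∀ j ∈ insert i S, ¬ Ev j M) ∪
          U.filter (fun M => (∀ j ∈ S, ¬ Ev j M) ∧ Ev i M) := by
          intro M hM
          simp only [mem_filter, mem_union, mem_insert, forall_eq_or_imp] at hM ⊢
          by_cases hh : Ev i M
          · exact Or.inr ⟨hM.1, hM.2, hh⟩
          · exact Or.inl ⟨hM.1, hh, hM.2⟩
        exact_mod_cast (card_le_card this).trans (card_union_le _ _)
      nlinarith
  have := pos J (Subset.refl _)
  have h0 : 0 < (U.filter (fun M => ∀ j ∈ J, ¬ Ev j M)).card := by exact_mod_cast this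
  obtain ⟨M, hM⟩ := card_pos.1 h0
  rw [mem_filter] at hM
  exact ⟨M, hM.1, hM.2⟩

/-- Beck–Fiala rounding, inductive form. -/
theorem beck_fiala_aux {κ ι : Type} [Fintype ι] [Fintype κ] (w : ι → κ → ℝ) (hw : ∀ i c, 0 ≤ w i c)
    (Δ : ℝ) (hΔ : 0 < Δ) (hcol : ∀ c, ∑ i, w i c ≤ Δ) :
    ∀ k : ℕ, ∀ x : κ → ℝ, (∀ c, 0 ≤ x c ∧ x c ≤ 1) →
      (univ.filter (fun c => x c ≠ 0 ∧ x c ≠ 1)).card = k →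
      ∃ y : κ → ℝ, (∀ c, y c = 0 ∨ y c = 1) ∧ (∀ c, (x c = 0 ∨ x c = 1) → y c = x c) ∧
        ∀ i, |∑ c, w i c * (y c - x c)| ≤ Δ := by
  intro k
  induction k using Nat.strong_induction_on with
  | _ k ih =>
    intro x hx hk
    set F := univ.filter (fun c => x c ≠ 0 ∧ x c ≠ 1) with hF
    have hFmem : ∀ c, c ∈ F ↔ (x c ≠ 0 ∧ x c ≠ 1) := by intro c; simp [hF]
    rcases F.eq_empty_or_nonempty with h0 | hne
    · refine ⟨x, fun c => ?_, fun c _ => rfl, fun i => by simpa using hΔ.le⟩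
      by_contra hc
      push Not at hc
      have := (hFmem c).2 hc
      rw [h0] at this
      simp at this
    · set Act := univ.filter (fun i => Δ < ∑ c ∈ F, w i c) with hAct
      have hlt : Act.card < F.card := by
        rcases Act.eq_empty_or_nonempty with ha | ha
        · rw [ha]; simpa using hne
        · have h1 : ∑ i ∈ Act, Δ < ∑ i ∈ Act, ∑ c ∈ F, w i c :=
            sum_lt_sum_of_nonempty ha (fun i hi => by
              rw [hAct, mem_filter] at hi; exact hi.2)
          have h2 : ∑ i ∈ Act, ∑ c ∈ F, w i c ≤ ∑ c ∈ F, Δ := by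
            rw [sum_comm]
            refine sum_le_sum (fun c _ => (sum_le_univ_sum_of_nonneg (fun i => hw i c)).trans (hcol c))
          rw [sum_const, nsmul_eq_mul] at h1 h2
          have h3 : (Act.card : ℝ) * Δ < F.card * Δ := lt_of_lt_of_le h1 h2
          exact_mod_cast lt_of_mul_lt_mul_right h3 hΔ.le
      let L : (F → ℝ) →ₗ[ℝ] (Act → ℝ) :=
        Matrix.toLin' (Matrix.of (fun (i : Act) (c : F) => w i c))
      have hker : LinearMap.ker L ≠ ⊥ := by
        apply LinearMap.ker_ne_bot_of_finrank_lt
        simpa using hlt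
      obtain ⟨z, hz, hz0⟩ := (Submodule.ne_bot_iff _).1 hker
      have hzL : ∀ i ∈ Act, ∑ c : F, w i c * z c = 0 := by
        intro i hi
        have := congrFun (LinearMap.mem_ker.1 hz) ⟨i, hi⟩
        simpa [L, Matrix.toLin'_apply, Matrix.mulVec, dotProduct] using this
      let zz : κ → ℝ := fun c => if h : c ∈ F then z ⟨c, h⟩ else 0
      have hzz : ∀ i ∈ Act, ∑ c, w i c * zz c = 0 := by
        intro i hi
        rw [← hzL i hi, ← sum_subset (subset_univ F) (fun c _ hc => by simp [zz, hc]),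
          ← sum_coe_sort F]
        refine sum_congr rfl (fun c _ => ?_)
        simp [zz]
      have hzzF : ∀ c, zz c ≠ 0 → c ∈ F := by
        intro c hc
        by_contra h
        exact hc (by simp [zz, h])
      have hzzne : (univ.filter (fun c => zz c ≠ 0)).Nonempty := by
        by_contra hcon
        rw [not_nonempty_iff_eq_empty, filter_eq_empty_iff] at hcon
        apply hz0
        funext c
        have := hcon (mem_univ c.1)
        simpa [zz] using this
      let room : κ → ℝ := fun c => if 0 < zz c then (1 - x c) / zz c else x c / (- zz c)
      obtain ⟨cs, hcs, hmin⟩ := exists_min_image _ room hzzne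
      simp only [mem_filter, mem_univ, true_and] at hcs hmin
      set t := room cs with ht
      let x' : κ → ℝ := fun c => x c + t * zz c
      have ht0 : 0 ≤ t := by
        rw [ht]; simp only [room]
        split_ifs with h
        · exact div_nonneg (by linarith [(hx cs).2]) h.le
        · exact div_nonneg (hx cs).1 (by linarith)
      have hx' : ∀ c, 0 ≤ x' c ∧ x' c ≤ 1 := by
        intro c
        simp only [x']
        rcases lt_trichotomy (zz c) 0 with h | h | h
        · have h1 := hmin c h.ne
          simp only [room, if_neg (not_lt.2 h.le)] at h1
          rw [le_div_iff₀ (by linarith)] at h1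
          constructor
          · linarith
          · nlinarith [(hx c).2]
        · rw [h]; simpa using hx c
        · have h1 := hmin c h.ne'
          simp only [room, if_pos h] at h1
          rw [le_div_iff₀ h] at h1
          constructor
          · nlinarith [(hx c).1]
          · linarith
      have hx'cs : x' cs = 0 ∨ x' cs = 1 := by
        simp only [x', ht, room]
        split_ifs with h
        · right; field_simp; ring
        · left
          have : zz cs ≠ 0 := hcs
          field_simp; ring
      have hsame : ∀ c, (x c = 0 ∨ x c = 1) → x' c = x c := by
        intro c hc
        have : zz c = 0 := by
          by_contra h
          have := (hFmem c).1 (hzzF c h)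
          tauto
        simp [x', this]
      obtain ⟨y, hy1, hy2, hy3⟩ := ih _ (by
        rw [← hk]
        refine card_lt_card (?_ : univ.filter (fun c => x' c ≠ 0 ∧ x' c ≠ 1) ⊂ F)
        refine ⟨fun c hc => ?_, fun hcon => ?_⟩
        · rw [hFmem]
          simp only [mem_filter, mem_univ, true_and] at hc
          by_contra hh
          have hh' : x c = 0 ∨ x c = 1 := by tauto
          rw [hsame c hh'] at hc
          tauto
        · have := hcon (hzzF cs hcs)
          simp only [mem_filter, mem_univ, true_and] at this
          tauto) x' hx' rfl
      have hyx : ∀ c, (x c = 0 ∨ x c = 1) → y c = x c := by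
        intro c hc
        have h1 := hsame c hc
        rw [← h1]
        apply hy2
        rw [h1]; exact hc
      refine ⟨y, hy1, hyx, fun i => ?_⟩
      by_cases hi : i ∈ Act
      · have h1 := hy3 i
        have h2 : ∑ c, w i c * (y c - x c) = ∑ c, w i c * (y c - x' c) := by
          have h3 : ∑ c, w i c * (y c - x c) - ∑ c, w i c * (y c - x' c)
              = t * ∑ c, w i c * zz c := by
            rw [← sum_sub_distrib, mul_sum]
            refine sum_congr rfl (fun c _ => ?_)
            simp only [x']; ring
          rw [hzz i hi] at h3
          linarith
        rw [h2]; exact h1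
      · have hi' : ∑ c ∈ F, w i c ≤ Δ := by
          by_contra hcon
          exact hi (by rw [hAct, mem_filter]; exact ⟨mem_univ _, not_le.1 hcon⟩)
        rw [← sum_subset (subset_univ F) (fun c _ hc => by
          rw [hyx c (by rw [hFmem] at hc; tauto)]; ring)]
        refine (abs_sum_le_sum_abs _ _).trans (le_trans (sum_le_sum (fun c _ => ?_)) hi')
        rw [abs_mul, abs_of_nonneg (hw i c)]
        have : |y c - x c| ≤ 1 := by
          rw [abs_le]
          rcases hy1 c with h | h <;> rw [h] <;> constructor <;> linarith [(hx c).1, (hx c).2]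
        nlinarith [hw i c]

theorem beck_fiala {κ ι : Type} [Fintype ι] (C : Finset κ) (w : ι → κ → ℝ)
    (hw : ∀ i c, 0 ≤ w i c)
    (Δ : ℝ) (hΔ : 0 < Δ) (hcol : ∀ c, ∑ i, w i c ≤ Δ) (p : ℝ) (hp0 : 0 ≤ p) (hp1 : p ≤ 1) :
    ∃ T ⊆ C, ∀ i, |∑ c ∈ T, w i c - p * ∑ c ∈ C, w i c| ≤ Δ := by
  obtain ⟨y, hy1, -, hy3⟩ := beck_fiala_aux (fun i (c : C) => w i c) (fun i c => hw i c) Δ hΔ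
    (fun c => hcol c) _ (fun _ => p) (fun _ => ⟨hp0, hp1⟩) rfl
  refine ⟨C.filter (fun c => ∃ h : c ∈ C, y ⟨c, h⟩ = 1), filter_subset _ _, fun i => ?_⟩
  have h := hy3 i
  have e : ∑ c ∈ C.filter (fun c => ∃ h : c ∈ C, y ⟨c, h⟩ = 1), w i c - p * ∑ c ∈ C, w i c
      = ∑ c : C, w i c * (y c - p) := by
    rw [sum_filter, ← sum_coe_sort C, ← sum_coe_sort C (fun c => w i c), mul_sum,
      ← sum_sub_distrib]
    refine sum_congr rfl (fun c _ => ?_)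
    rcases hy1 c with h | h
    · rw [if_neg (by rintro ⟨_, h2⟩; rw [h] at h2; norm_num at h2), h]; ring
    · rw [if_pos ⟨c.2, h⟩, h]; ring
  rw [e]; exact h

end
end RB

namespace RB
section
open Classical Finset

/-- Six-cycle switching: removing the edge `(a,b)` from matchings. -/
theorem switch_count {n : ℕ} (E : Fin n → Fin n → Prop) (χ : Fin n → Fin n → ℕ) (c μ : ℝ)
    (hμ : 4 * μ ≤ c) (hn : 20 ≤ c * n)
    (hχ : ∀ col, ((univ.filter (fun e : Fin n × Fin n => E e.1 e.2 ∧ χ e.1 e.2 = col)).card : ℝ)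
      ≤ μ * n)
    (a b : Fin n) (Z : Finset (Fin n)) (hZ : Z.card ≤ 1) (haZ : a ∉ Z) (f : Fin n → Fin n)
    (S : Finset (Fin n × Fin n × Fin n × Fin n))
    (hS : ∀ q ∈ S, q.1 ≠ a ∧ q.2.1 ≠ b ∧ q.2.2.1 ≠ a ∧ q.2.2.2 ≠ b ∧ q.1 ≠ q.2.2.1 ∧
      χ q.1 q.2.1 = χ q.2.2.1 q.2.2.2)
    (hcount : ∀ M : Equiv.Perm (Fin n), (∀ x, E x (M x)) → c * (n : ℝ) ^ 2 ≤
      ((univ.filter (fun e : Fin n × Fin n => E a (M e.1) ∧ E e.1 (M e.2) ∧ E e.2 (M a))).card : ℝ))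
    (F : Finset (Equiv.Perm (Fin n)))
    (hF : ∀ M, M ∈ F ↔ (∀ x, E x (M x)) ∧ (∀ q ∈ S, ¬ (M q.1 = q.2.1 ∧ M q.2.2.1 = q.2.2.2)) ∧
      ∀ z ∈ Z, M z = f z) :
    ((F.filter (fun M => M a = b)).card : ℝ) * (c / 2 * n) ≤ F.card := by
  have hn0 : (0:ℝ) < n := by
    rcases Nat.eq_zero_or_pos n with h | h
    · subst h; simp at hn; linarith
    · exact_mod_cast h
  let V : Equiv.Perm (Fin n) → Finset (Fin n × Fin n) := fun M =>
    univ.filter (fun e => (E a (M e.1) ∧ E e.1 (M e.2) ∧ E e.2 (M a)) ∧ e.1 ≠ a ∧ e.2 ≠ a ∧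
      e.1 ≠ e.2 ∧ e.1 ∉ Z ∧ e.2 ∉ Z ∧ ∀ x, χ e.1 (M e.2) ≠ χ x (M x))
  have hV : ∀ M ∈ F, c / 2 * (n:ℝ) ^ 2 ≤ ((V M).card : ℝ) := by
    intro M hM
    have hE := ((hF M).1 hM).1
    have h1 := hcount M hE
    have hcol : ∀ x : Fin n, (univ.filter (fun e : Fin n × Fin n => E e.1 (M e.2) ∧
        χ e.1 (M e.2) = χ x (M x))).card ≤
        (univ.filter (fun e : Fin n × Fin n => E e.1 e.2 ∧ χ e.1 e.2 = χ x (M x))).card := by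
      intro x
      refine card_le_card_of_injOn (fun e => (e.1, M e.2)) ?_ ?_
      · intro e he
        simpa using he
      · rintro ⟨e1, e2⟩ _ ⟨e3, e4⟩ _ h
        simpa using h
    have hsub : (univ.filter (fun e : Fin n × Fin n => E a (M e.1) ∧ E e.1 (M e.2) ∧ E e.2 (M a)))
        ⊆ V M ∪ (({a} ×ˢ univ) ∪ ((univ ×ˢ {a}) ∪ ((univ.image (fun x => (x, x))) ∪
          ((Z ×ˢ univ) ∪ ((univ ×ˢ Z) ∪ univ.biUnion (fun x => univ.filter
          (fun e : Fin n × Fin n => E e.1 (M e.2) ∧ χ e.1 (M e.2) = χ x (M x)))))))) := by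
      rintro ⟨e1, e2⟩ he
      simp only [mem_filter, mem_univ, true_and] at he
      simp only [V, mem_union, mem_filter, mem_univ, true_and, mem_product, mem_singleton,
        mem_image, mem_biUnion, and_true, Prod.mk.injEq]
      by_contra hcon
      push Not at hcon
      obtain ⟨h0, h1, h2, h3, h4, h5, h6⟩ := hcon
      obtain ⟨x, hx⟩ := h0 he h1 h2 (fun h => h3 e1 rfl h) h4 h5
      exact h6 x he.2.1 hx
    have hc := card_le_card hsub
    have hu : ∀ s t : Finset (Fin n × Fin n), ((s ∪ t).card : ℝ) ≤ s.card + t.card := by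
      intro s t; exact_mod_cast card_union_le s t
    have hc' := (Nat.cast_le (α := ℝ)).2 hc
    have b1 : ((({a} : Finset (Fin n)) ×ˢ (univ : Finset (Fin n))).card : ℝ) = n := by simp
    have b2 : (((univ : Finset (Fin n)) ×ˢ ({a} : Finset (Fin n))).card : ℝ) = n := by simp
    have b3 : (((univ : Finset (Fin n)).image (fun x => (x, x))).card : ℝ) ≤ n := by
      exact_mod_cast card_image_le.trans (by simp)
    have hZ' : (Z.card : ℝ) ≤ 1 := by exact_mod_cast hZ
    have b4 : ((Z ×ˢ (univ : Finset (Fin n))).card : ℝ) ≤ n := by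
      rw [card_product]; push_cast; simp; nlinarith
    have b5 : (((univ : Finset (Fin n)) ×ˢ Z).card : ℝ) ≤ n := by
      rw [card_product]; push_cast; simp; nlinarith
    have b6 : (((univ : Finset (Fin n)).biUnion (fun x => univ.filter
          (fun e : Fin n × Fin n => E e.1 (M e.2) ∧ χ e.1 (M e.2) = χ x (M x)))).card : ℝ)
          ≤ n * (μ * n) := by
      have h := card_biUnion_le (s := (univ : Finset (Fin n))) (t := fun x => univ.filter
          (fun e : Fin n × Fin n => E e.1 (M e.2) ∧ χ e.1 (M e.2) = χ x (M x)))
      have h' : (((univ : Finset (Fin n)).biUnion (fun x => univ.filter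
          (fun e : Fin n × Fin n => E e.1 (M e.2) ∧ χ e.1 (M e.2) = χ x (M x)))).card : ℝ)
          ≤ ∑ x : Fin n, (((univ.filter
          (fun e : Fin n × Fin n => E e.1 (M e.2) ∧ χ e.1 (M e.2) = χ x (M x))).card : ℕ) : ℝ) := by
        exact_mod_cast h
      refine h'.trans ((sum_le_sum (fun x _ => ?_)).trans
        (by rw [sum_const, nsmul_eq_mul, card_univ, Fintype.card_fin]))
      exact (Nat.cast_le.2 (hcol x)).trans (hχ _)
    have t1 := hu (V M) (({a} ×ˢ univ) ∪ ((univ ×ˢ {a}) ∪ ((univ.image (fun x => (x, x))) ∪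
          ((Z ×ˢ univ) ∪ ((univ ×ˢ Z) ∪ univ.biUnion (fun x => univ.filter
          (fun e : Fin n × Fin n => E e.1 (M e.2) ∧ χ e.1 (M e.2) = χ x (M x))))))))
    have t2 := hu ({a} ×ˢ univ) ((univ ×ˢ {a}) ∪ ((univ.image (fun x => (x, x))) ∪
          ((Z ×ˢ univ) ∪ ((univ ×ˢ Z) ∪ univ.biUnion (fun x => univ.filter
          (fun e : Fin n × Fin n => E e.1 (M e.2) ∧ χ e.1 (M e.2) = χ x (M x)))))))
    have t3 := hu (univ ×ˢ {a}) ((univ.image (fun x => (x, x))) ∪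
          ((Z ×ˢ univ) ∪ ((univ ×ˢ Z) ∪ univ.biUnion (fun x => univ.filter
          (fun e : Fin n × Fin n => E e.1 (M e.2) ∧ χ e.1 (M e.2) = χ x (M x))))))
    have t4 := hu (univ.image (fun x => (x, x)))
          ((Z ×ˢ univ) ∪ ((univ ×ˢ Z) ∪ univ.biUnion (fun x => univ.filter
          (fun e : Fin n × Fin n => E e.1 (M e.2) ∧ χ e.1 (M e.2) = χ x (M x)))))
    have t5 := hu (Z ×ˢ univ) ((univ ×ˢ Z) ∪ univ.biUnion (fun x => univ.filter
          (fun e : Fin n × Fin n => E e.1 (M e.2) ∧ χ e.1 (M e.2) = χ x (M x))))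
    have t6 := hu (univ ×ˢ Z) (univ.biUnion (fun x => univ.filter
          (fun e : Fin n × Fin n => E e.1 (M e.2) ∧ χ e.1 (M e.2) = χ x (M x))))
    have key : c * (n:ℝ) ^ 2 ≤ ((V M).card : ℝ) + (5 * n + n * (μ * n)) := by linarith
    nlinarith
  let σ : Fin n × Fin n → Equiv.Perm (Fin n) := fun e => Equiv.swap a e.1 * Equiv.swap e.1 e.2
  let P := (F.filter (fun M => M a = b)).sigma (fun M => V M)
  have hσ : ∀ (M : Equiv.Perm (Fin n)) (e : Fin n × Fin n), e.1 ≠ a → e.2 ≠ a → e.1 ≠ e.2 →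
      (M * σ e) a = M e.1 ∧ (M * σ e) e.1 = M e.2 ∧ (M * σ e) e.2 = M a ∧
      ∀ x, x ≠ a → x ≠ e.1 → x ≠ e.2 → (M * σ e) x = M x := by
    intro M e h1 h2 h3
    refine ⟨?_, ?_, ?_, ?_⟩
    · simp [σ, Equiv.swap_apply_of_ne_of_ne h1.symm h2.symm]
    · simp [σ, Equiv.swap_apply_of_ne_of_ne h2 h3.symm]
    · simp [σ]
    · intro x hx1 hx2 hx3
      simp [σ, Equiv.swap_apply_of_ne_of_ne hx2 hx3, Equiv.swap_apply_of_ne_of_ne hx1 hx2]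
  have hPle : P.card ≤ (F ×ˢ (univ : Finset (Fin n))).card := by
    refine card_le_card_of_injOn (fun q => (q.1 * σ q.2, q.2.1)) ?_ ?_
    · rintro ⟨M, e⟩ hq
      simp only [P, coe_sigma, Set.mem_sigma_iff, mem_coe, mem_filter, V, mem_univ, true_and] at hq
      obtain ⟨⟨hMF, hMa⟩, ⟨hE1, hE2, hE3⟩, h1, h2, h3, h4, h5, h6⟩ := hq
      obtain ⟨s1, s2, s3, s4⟩ := hσ M e h1 h2 h3
      obtain ⟨k1, k2, k3⟩ := (hF M).1 hMF
      simp only [coe_product, Set.mem_prod, mem_coe, mem_univ, and_true]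
      rw [hF]
      refine ⟨?_, ?_, ?_⟩
      · intro x
        by_cases hx1 : x = a
        · rw [hx1, s1]; exact hE1
        by_cases hx2 : x = e.1
        · rw [hx2, s2]; exact hE2
        by_cases hx3 : x = e.2
        · rw [hx3, s3]; exact hE3
        rw [s4 x hx1 hx2 hx3]; exact k1 x
      · rintro ⟨x, y, x', y'⟩ hq ⟨g1, g2⟩
        obtain ⟨u1, u2, u3, u4, u5, u6⟩ := hS _ hq
        have u7 := k2 _ hq
        dsimp only at *
        have v1 : x ≠ e.2 := by
          rintro rfl; rw [s3, hMa] at g1; exact u2 g1.symm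
        have v2 : x' ≠ e.2 := by
          rintro rfl; rw [s3, hMa] at g2; exact u4 g2.symm
        by_cases w1 : x = e.1
        · have w2 : x' ≠ e.1 := by rw [← w1]; exact u5.symm
          rw [s4 x' u3 w2 v2] at g2
          rw [w1, s2] at g1
          apply h6 x'
          rw [g1, g2, ← w1]; exact u6
        · by_cases w2 : x' = e.1
          · rw [s4 x u1 w1 v1] at g1
            rw [w2, s2] at g2
            apply h6 x
            rw [g1, g2, ← w2]; exact u6.symm
          · rw [s4 x u1 w1 v1] at g1
            rw [s4 x' u3 w2 v2] at g2
            exact u7 ⟨g1, g2⟩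
      · intro z hz
        rw [s4 z (by rintro rfl; exact haZ hz) (by rintro rfl; exact h4 hz)
          (by rintro rfl; exact h5 hz)]
        exact k3 z hz
    · rintro ⟨M, e⟩ hq ⟨M2, e2⟩ hq2 heq
      simp only [P, coe_sigma, Set.mem_sigma_iff, mem_coe, mem_filter, V, mem_univ, true_and]
        at hq hq2
      obtain ⟨⟨hMF, hMa⟩, -, h1, h2, h3, -⟩ := hq
      obtain ⟨⟨hMF2, hMa2⟩, -, h12, h22, h32, -⟩ := hq2
      obtain ⟨-, -, s3, -⟩ := hσ M e h1 h2 h3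
      obtain ⟨-, -, s32, -⟩ := hσ M2 e2 h12 h22 h32
      simp only [Prod.mk.injEq] at heq
      obtain ⟨heq1, heq2⟩ := heq
      have e22 : e.2 = e2.2 := by
        apply (M * σ e).injective
        rw [s3]
        rw [heq1, s32, hMa, hMa2]
      have ee : e = e2 := Prod.ext heq2 e22
      subst ee
      have : M = M2 := mul_right_cancel heq1
      subst this
      rfl
  have hPge : ((F.filter (fun M => M a = b)).card : ℝ) * (c / 2 * (n:ℝ) ^ 2) ≤ P.card := by
    have : P.card = ∑ M ∈ F.filter (fun M => M a = b), (V M).card := card_sigma _ _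
    rw [this]
    push_cast
    rw [← nsmul_eq_mul, ← sum_const]
    exact sum_le_sum (fun M hM => hV M (mem_filter.1 hM).1)
  have h3 : (P.card : ℝ) ≤ F.card * n := by
    have : P.card ≤ F.card * n := by simpa [card_product] using hPle
    exact_mod_cast this
  have h4 : (((F.filter (fun M => M a = b)).card : ℝ) * (c / 2 * n)) * n ≤ F.card * n := by
    nlinarith
  exact le_of_mul_le_mul_right h4 hn0

/-- Core: if every matching has many six-cycle switchings at every relevant vertex, there is a
rainbow perfect matching. -/
theorem core {n : ℕ} (E : Fin n → Fin n → Prop) (χ : Fin n → Fin n → ℕ) (c μ : ℝ)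
    (hc0 : 0 < c) (hc1 : c ≤ 1) (hμ0 : 0 ≤ μ) (hμ : 128 * μ ≤ c ^ 2) (hn : 20 ≤ c * n)
    (hχ : ∀ col, ((univ.filter (fun e : Fin n × Fin n => E e.1 e.2 ∧ χ e.1 e.2 = col)).card : ℝ)
      ≤ μ * n)
    (R : Fin n → Prop)
    (hR : ∀ a b a' b', a ≠ a' → b ≠ b' → E a b → E a' b' → χ a b = χ a' b' → R a)
    (hex : ∃ M : Equiv.Perm (Fin n), ∀ x, E x (M x))
    (hcount : ∀ M : Equiv.Perm (Fin n), (∀ x, E x (M x)) → ∀ a, R a → c * (n : ℝ) ^ 2 ≤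
      ((univ.filter (fun e : Fin n × Fin n => E a (M e.1) ∧ E e.1 (M e.2) ∧ E e.2 (M a))).card : ℝ)) :
    ∃ M : Equiv.Perm (Fin n), (∀ x, E x (M x)) ∧ ∀ x x', χ x (M x) = χ x' (M x') → x = x' := by
  have hn0 : (0:ℝ) < n := by
    rcases Nat.eq_zero_or_pos n with h | h
    · subst h; simp at hn; linarith
    · exact_mod_cast h
  let J : Finset (Fin n × Fin n × Fin n × Fin n) := univ.filter (fun q =>
    q.1 ≠ q.2.2.1 ∧ q.2.1 ≠ q.2.2.2 ∧ E q.1 q.2.1 ∧ E q.2.2.1 q.2.2.2 ∧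
      χ q.1 q.2.1 = χ q.2.2.1 q.2.2.2)
  let Γ : Fin n × Fin n × Fin n × Fin n → Finset (Fin n × Fin n × Fin n × Fin n) := fun q =>
    univ.filter (fun r => r.1 = q.1 ∨ r.1 = q.2.2.1 ∨ r.2.2.1 = q.1 ∨ r.2.2.1 = q.2.2.1 ∨
      r.2.1 = q.2.1 ∨ r.2.1 = q.2.2.2 ∨ r.2.2.2 = q.2.1 ∨ r.2.2.2 = q.2.2.2)
  let Ev : Fin n × Fin n × Fin n × Fin n → Equiv.Perm (Fin n) → Prop := fun q M =>
    M q.1 = q.2.1 ∧ M q.2.2.1 = q.2.2.2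
  let U : Finset (Equiv.Perm (Fin n)) := univ.filter (fun M => ∀ x, E x (M x))
  have gen : ∀ (W : Finset (Fin n × Fin n × Fin n × Fin n)) (g : Fin n → ℕ)
      (h : Fin n → Fin n × Fin n → Fin n × Fin n × Fin n × Fin n),
      (∀ q ∈ W, ∃ y, ∃ e : Fin n × Fin n, (E e.1 e.2 ∧ χ e.1 e.2 = g y) ∧ h y e = q) →
      (W.card : ℝ) ≤ n * (μ * n) := by
    intro W g h hW
    have hsub : W ⊆ univ.biUnion (fun y => (univ.filter
        (fun e : Fin n × Fin n => E e.1 e.2 ∧ χ e.1 e.2 = g y)).image (h y)) := by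
      intro q hq
      obtain ⟨y, e, he, hh⟩ := hW q hq
      simp only [mem_biUnion, mem_univ, true_and, mem_image, mem_filter]
      exact ⟨y, e, he, hh⟩
    have h1 : (W.card : ℝ) ≤ ∑ y : Fin n, (((univ.filter
        (fun e : Fin n × Fin n => E e.1 e.2 ∧ χ e.1 e.2 = g y)).card : ℕ) : ℝ) := by
      exact_mod_cast (card_le_card hsub).trans
        (card_biUnion_le.trans (sum_le_sum (fun y _ => card_image_le)))
    refine h1.trans ((sum_le_sum (fun y _ => hχ (g y))).trans ?_)
    rw [sum_const, nsmul_eq_mul, card_univ, Fintype.card_fin]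
  have g1 : ∀ v, ((J.filter (fun r => r.1 = v)).card : ℝ) ≤ n * (μ * n) := by
    intro v
    refine gen _ (fun y => χ v y) (fun y e => (v, y, e.1, e.2)) ?_
    rintro ⟨x, y, x', y'⟩ hq
    simp only [J, mem_filter, mem_univ, true_and] at hq
    obtain ⟨⟨-, -, h1, h2, h3⟩, rfl⟩ := hq
    exact ⟨y, (x', y'), ⟨h2, h3.symm⟩, rfl⟩
  have g2 : ∀ v, ((J.filter (fun r => r.2.1 = v)).card : ℝ) ≤ n * (μ * n) := by
    intro v
    refine gen _ (fun y => χ y v) (fun y e => (y, v, e.1, e.2)) ?_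
    rintro ⟨x, y, x', y'⟩ hq
    simp only [J, mem_filter, mem_univ, true_and] at hq
    obtain ⟨⟨-, -, h1, h2, h3⟩, rfl⟩ := hq
    exact ⟨x, (x', y'), ⟨h2, h3.symm⟩, rfl⟩
  have g3 : ∀ v, ((J.filter (fun r => r.2.2.1 = v)).card : ℝ) ≤ n * (μ * n) := by
    intro v
    refine gen _ (fun y => χ v y) (fun y e => (e.1, e.2, v, y)) ?_
    rintro ⟨x, y, x', y'⟩ hq
    simp only [J, mem_filter, mem_univ, true_and] at hq
    obtain ⟨⟨-, -, h1, h2, h3⟩, rfl⟩ := hq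
    exact ⟨y', (x, y), ⟨h1, h3⟩, rfl⟩
  have g4 : ∀ v, ((J.filter (fun r => r.2.2.2 = v)).card : ℝ) ≤ n * (μ * n) := by
    intro v
    refine gen _ (fun y => χ y v) (fun y e => (e.1, e.2, y, v)) ?_
    rintro ⟨x, y, x', y'⟩ hq
    simp only [J, mem_filter, mem_univ, true_and] at hq
    obtain ⟨⟨-, -, h1, h2, h3⟩, rfl⟩ := hq
    exact ⟨x', (x, y), ⟨h1, h3⟩, rfl⟩
  have hΓ : ∀ q, ((Γ q ∩ J).card : ℝ) ≤ 8 * (n * (μ * n)) := by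
    intro q
    have hsub : Γ q ∩ J ⊆ J.filter (fun r => r.1 = q.1) ∪ (J.filter (fun r => r.1 = q.2.2.1) ∪
        (J.filter (fun r => r.2.2.1 = q.1) ∪ (J.filter (fun r => r.2.2.1 = q.2.2.1) ∪
        (J.filter (fun r => r.2.1 = q.2.1) ∪ (J.filter (fun r => r.2.1 = q.2.2.2) ∪
        (J.filter (fun r => r.2.2.2 = q.2.1) ∪ J.filter (fun r => r.2.2.2 = q.2.2.2))))))) := by
      intro r hr
      rw [mem_inter] at hr
      obtain ⟨hr1, hr2⟩ := hr
      simp only [Γ, mem_filter, mem_univ, true_and] at hr1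
      simp only [mem_union, mem_filter, hr2, true_and]
      exact hr1
    have h1 := card_le_card hsub
    have h2 : ∀ s t : Finset (Fin n × Fin n × Fin n × Fin n), (s ∪ t).card ≤ s.card + t.card :=
      card_union_le
    have h3 : (Γ q ∩ J).card ≤ (J.filter (fun r => r.1 = q.1)).card +
        ((J.filter (fun r => r.1 = q.2.2.1)).card +
        ((J.filter (fun r => r.2.2.1 = q.1)).card + ((J.filter (fun r => r.2.2.1 = q.2.2.1)).card +
        ((J.filter (fun r => r.2.1 = q.2.1)).card + ((J.filter (fun r => r.2.1 = q.2.2.2)).card +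
        ((J.filter (fun r => r.2.2.2 = q.2.1)).card +
          (J.filter (fun r => r.2.2.2 = q.2.2.2)).card)))))) := by
      refine h1.trans ((h2 _ _).trans (Nat.add_le_add_left ?_ _))
      refine ((h2 _ _).trans (Nat.add_le_add_left ?_ _))
      refine ((h2 _ _).trans (Nat.add_le_add_left ?_ _))
      refine ((h2 _ _).trans (Nat.add_le_add_left ?_ _))
      refine ((h2 _ _).trans (Nat.add_le_add_left ?_ _))
      refine ((h2 _ _).trans (Nat.add_le_add_left ?_ _))
      exact h2 _ _
    have h4 := (Nat.cast_le (α := ℝ)).2 h3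
    push_cast at h4
    have := g1 q.1
    have := g1 q.2.2.1
    have := g3 q.1
    have := g3 q.2.2.1
    have := g2 q.2.1
    have := g2 q.2.2.2
    have := g4 q.2.1
    have := g4 q.2.2.2
    linarith
  have hμc : 4 * μ ≤ c := by nlinarith
  have hcn : 0 < c * n := by positivity
  obtain ⟨M, hMU, hM⟩ := lll U (by
      obtain ⟨M, hM⟩ := hex
      exact ⟨M, by simpa [U] using hM⟩) Ev J Γ (4 / (c * n) ^ 2) (by positivity)
      (by rw [div_le_div_iff₀ (by positivity) (by norm_num)]; nlinarith)
      (by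
        intro q _
        have h1 := hΓ q
        have h2 : 4 * (4 / (c * n) ^ 2) * ((Γ q ∩ J).card : ℝ) ≤
            4 * (4 / (c * n) ^ 2) * (8 * (n * (μ * n))) :=
          mul_le_mul_of_nonneg_left h1 (by positivity)
        have h3 : 4 * (4 / (c * n) ^ 2) * ((Γ q ∩ J).card : ℝ) ≤ 1 := by
         refine h2.trans ?_
         have : 4 * (4 / (c * n) ^ 2) * (8 * (n * (μ * n))) = 128 * μ / c ^ 2 := by
          field_simp; ring
         rw [this, div_le_one (by positivity)]
         exact hμ
        convert h3)
      (by
        rintro ⟨a, b, a', b'⟩ hq S hSJ hdis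
        have hq' := hq
        simp only [J, mem_filter, mem_univ, true_and] at hq'
        obtain ⟨ha, hb, hE1, hE2, hχe⟩ := hq'
        have hSprop : ∀ q ∈ S, (q.1 ≠ a ∧ q.2.1 ≠ b ∧ q.2.2.1 ≠ a ∧ q.2.2.2 ≠ b) ∧
            (q.1 ≠ a' ∧ q.2.1 ≠ b' ∧ q.2.2.1 ≠ a' ∧ q.2.2.2 ≠ b') ∧ q.1 ≠ q.2.2.1 ∧
            χ q.1 q.2.1 = χ q.2.2.1 q.2.2.2 := by
          intro q hqS
          have h1 := hSJ hqS
          simp only [J, mem_filter, mem_univ, true_and] at h1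
          have h2 : q ∉ Γ (a, b, a', b') := fun h => (disjoint_left.1 hdis) hqS h
          simp only [Γ, mem_filter, mem_univ, true_and] at h2
          tauto
        have st1 := switch_count E χ c μ hμc hn hχ a b {a'} (by simp) (by simpa using ha)
          (fun _ => b') S (fun q hqS => by have := hSprop q hqS; tauto)
          (fun M hM => hcount M hM a (hR a b a' b' ha hb hE1 hE2 hχe))
          (U.filter (fun M => (∀ j ∈ S, ¬ Ev j M) ∧ M a' = b'))
          (by intro M; simp [U, Ev])
        have st2 := switch_count E χ c μ hμc hn hχ a' b' ∅ (by simp) (by simp)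
          (fun _ => b') S (fun q hqS => by have := hSprop q hqS; tauto)
          (fun M hM => hcount M hM a' (hR a' b' a b ha.symm hb.symm hE2 hE1 hχe.symm))
          (U.filter (fun M => (∀ j ∈ S, ¬ Ev j M)))
          (by intro M; simp [U, Ev])
        rw [filter_filter] at st1 st2
        have e1 : U.filter (fun M => (∀ j ∈ S, ¬ Ev j M) ∧ Ev (a, b, a', b') M) =
            U.filter (fun M => ((∀ j ∈ S, ¬ Ev j M) ∧ M a' = b') ∧ M a = b) := by
          apply filter_congr
          intro M _
          simp only [Ev]
          tauto
        have h5 := mul_le_mul_of_nonneg_right st1 (show 0 ≤ c / 2 * (n:ℝ) by positivity)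
        have h6 : ((U.filter (fun M => (∀ j ∈ S, ¬ Ev j M) ∧ Ev (a, b, a', b') M)).card : ℝ) ≤
            4 / (c * n) ^ 2 * (U.filter (fun M => ∀ j ∈ S, ¬ Ev j M)).card := by
          rw [e1]
          rw [div_mul_eq_mul_div, le_div_iff₀ (by positivity)]
          nlinarith
        convert h6)
  refine ⟨M, by simpa [U] using hMU, fun x x' hxx => ?_⟩
  by_contra hne
  have hE : ∀ x, E x (M x) := by simpa [U] using hMU
  refine hM (x, M x, x', M x') ?_ ⟨rfl, rfl⟩
  simp only [J, mem_filter, mem_univ, true_and]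
  exact ⟨hne, fun h => hne (M.injective h), hE x, hE x', hxx⟩

end
end RB

namespace RB
section
open Classical Finset

theorem hall_perm {n : ℕ} (E : Fin n → Fin n → Prop)
    (h : ∀ S : Finset (Fin n), S.card ≤ (univ.filter (fun b => ∃ a ∈ S, E a b)).card) :
    ∃ M : Equiv.Perm (Fin n), ∀ x, E x (M x) := by
  have h1 := (Finset.all_card_le_biUnion_card_iff_exists_injective
    (fun a : Fin n => univ.filter (fun b => E a b))).1 (by
      intro S
      refine (h S).trans (card_le_card ?_)
      intro b hb
      simp only [mem_filter, mem_univ, true_and, mem_biUnion] at hb ⊢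
      exact hb)
  obtain ⟨f, hf, hf2⟩ := h1
  refine ⟨Equiv.ofBijective f (Finite.injective_iff_bijective.1 hf), fun x => ?_⟩
  simpa using hf2 x

theorem card_filter_perm {n : ℕ} (M : Equiv.Perm (Fin n)) (P : Fin n → Prop) :
    (univ.filter (fun x => P (M x))).card = (univ.filter P).card := by
  refine card_bij (fun x _ => M x) (by simp) (by simp) ?_
  intro b hb
  exact ⟨M.symm b, by simpa using hb, by simp⟩

/-- The non-extremal case. -/
theorem nonextremal {n : ℕ} (E : Fin n → Fin n → Prop) (χ : Fin n → Fin n → ℕ) (c μ : ℝ)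
    (hc0 : 0 < c) (hc1 : c ≤ 1) (hμ0 : 0 ≤ μ) (hμ : 128 * μ ≤ c ^ 2) (hn : 20 ≤ c * n)
    (hχ : ∀ col, ((univ.filter (fun e : Fin n × Fin n => E e.1 e.2 ∧ χ e.1 e.2 = col)).card : ℝ)
      ≤ μ * n)
    (hA : ∀ a, n ≤ 2 * (univ.filter (fun b => E a b)).card)
    (hB : ∀ b, n ≤ 2 * (univ.filter (fun a => E a b)).card)
    (hXY : ∀ X Y : Finset (Fin n), n ≤ 2 * X.card → n ≤ 2 * Y.card →
      c * (n:ℝ) ^ 2 ≤ ((univ.filter (fun e : Fin n × Fin n => e.1 ∈ X ∧ e.2 ∈ Y ∧ E e.1 e.2)).card : ℝ)) :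
    ∃ M : Equiv.Perm (Fin n), (∀ x, E x (M x)) ∧ ∀ x x', χ x (M x) = χ x' (M x') → x = x' := by
  refine core E χ c μ hc0 hc1 hμ0 hμ hn hχ (fun _ => True) (by simp) ?_ ?_
  · apply hall_perm
    intro S
    by_cases hS : 2 * S.card ≤ n
    · rcases S.eq_empty_or_nonempty with h0 | ⟨a, ha⟩
      · simp [h0]
      · have h1 : (univ.filter (fun b => E a b)).card ≤
            (univ.filter (fun b => ∃ a ∈ S, E a b)).card := by
          refine card_le_card (fun b hb => ?_)
          simp only [mem_filter, mem_univ, true_and] at hb ⊢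
          exact ⟨a, ha, hb⟩
        have := hA a
        omega
    · have : univ.filter (fun b => ∃ a ∈ S, E a b) = univ := by
        rw [filter_eq_self]
        intro b _
        by_contra hcon
        push Not at hcon
        have h1 : (univ.filter (fun a => E a b)) ⊆ Sᶜ := by
          intro a ha
          simp only [mem_filter, mem_univ, true_and] at ha
          rw [mem_compl]
          exact fun h => hcon a h ha
        have h2 := card_le_card h1
        rw [card_compl, Fintype.card_fin] at h2
        have := hB b
        have h9 := card_le_univ S
        rw [Fintype.card_fin] at h9
        omega
      rw [this]
      exact card_le_univ S
  · intro M hM a _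
    have h1 := hXY (univ.filter (fun x => E a (M x))) (univ.filter (fun y => E (M.symm y) (M a)))
      (by rw [card_filter_perm M (fun y => E a y)]; exact hA a)
      (by rw [card_filter_perm M.symm (fun x => E x (M a))]; exact hB _)
    refine h1.trans ?_
    refine Nat.cast_le.2 (card_le_card_of_injOn (fun e => (e.1, M.symm e.2)) ?_ ?_)
    · intro e he
      simp only [coe_filter, mem_filter, mem_univ, true_and, Set.mem_ofPred_eq] at he ⊢
      refine ⟨he.1, by simpa using he.2.2, he.2.1⟩
    · rintro ⟨e1, e2⟩ _ ⟨e3, e4⟩ _ h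
      simpa using h

/-- Matching clusters which are nearly complete. -/
theorem cluster {n : ℕ} (F : Fin n → Fin n → Prop) (χ : Fin n → Fin n → ℕ) (ρ μ : ℝ)
    (hρ0 : 0 < ρ) (hρ1 : ρ ≤ 1) (hμ0 : 0 ≤ μ) (hμ : 128 * μ ≤ (ρ ^ 2 / 2) ^ 2)
    (hn : 20 ≤ ρ ^ 2 / 2 * n)
    (hχ : ∀ col, ((univ.filter (fun e : Fin n × Fin n => F e.1 e.2 ∧ χ e.1 e.2 = col)).card : ℝ)
      ≤ μ * n)
    (la lb : Fin n → Fin 3) (hl : ∀ a b, F a b → la a = lb b)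
    (hR : ∀ a b a' b', a ≠ a' → b ≠ b' → F a b → F a' b' → χ a b = χ a' b' → la a ≠ 0)
    (hsize : ∀ i ≠ 0, (univ.filter (fun a => la a = i)).card = (univ.filter (fun b => lb b = i)).card)
    (hA : ∀ a, la a ≠ 0 → ρ * n ≤ ((univ.filter (fun b => F a b)).card : ℝ))
    (hB : ∀ b, lb b ≠ 0 → ρ * n ≤ ((univ.filter (fun a => F a b)).card : ℝ))
    (hne : ((univ.filter (fun e : Fin n × Fin n => la e.1 ≠ 0 ∧ la e.1 = lb e.2 ∧
      ¬ F e.1 e.2)).card : ℝ) ≤ ρ ^ 2 / 2 * (n:ℝ) ^ 2)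
    (k : Fin n → Fin n) (hk : ∀ a, la a = 0 → F a (k a))
    (hkinj : ∀ a a', la a = 0 → la a' = 0 → k a = k a' → a = a') :
    ∃ M : Equiv.Perm (Fin n), (∀ x, F x (M x)) ∧ ∀ x x', χ x (M x) = χ x' (M x') → x = x' := by
  have hn0 : (0:ℝ) < n := by
    rcases Nat.eq_zero_or_pos n with h | h
    · subst h; simp at hn; linarith
    · exact_mod_cast h
  have hprod : ∀ (X Y : Finset (Fin n)), ρ * n ≤ (X.card : ℝ) → ρ * n ≤ (Y.card : ℝ) →
      ρ ^ 2 * (n:ℝ) ^ 2 ≤ ((X ×ˢ Y).card : ℝ) := by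
    intro X Y hX hY
    rw [card_product]; push_cast
    calc ρ ^ 2 * (n:ℝ) ^ 2 = (ρ * n) * (ρ * n) := by ring
      _ ≤ _ := mul_le_mul hX hY (by positivity) (by positivity)
  refine core F χ (ρ ^ 2 / 2) μ (by positivity) (by nlinarith) hμ0 hμ hn hχ (fun a => la a ≠ 0) hR ?_ ?_
  · apply hall_perm
    intro S
    by_contra hcon
    push Not at hcon
    set N := univ.filter (fun b => ∃ a ∈ S, F a b) with hN
    have e1 : N.card = ∑ i : Fin 3, (N.filter (fun b => lb b = i)).card :=
      card_eq_sum_card_fiberwise (fun b _ => mem_coe.2 (mem_univ _))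
    have e2 : S.card = ∑ i : Fin 3, (S.filter (fun b => la b = i)).card :=
      card_eq_sum_card_fiberwise (fun b _ => mem_coe.2 (mem_univ _))
    rw [e1, e2] at hcon
    obtain ⟨i, -, hi⟩ := exists_lt_of_sum_lt hcon
    by_cases hi0 : i = 0
    · subst hi0
      refine absurd hi (not_lt.2 (card_le_card_of_injOn k ?_ ?_))
      · intro a ha
        simp only [coe_filter, Set.mem_ofPred_eq] at ha ⊢
        have hF := hk a ha.2
        refine ⟨?_, by rw [← hl _ _ hF]; exact ha.2⟩
        rw [hN, mem_filter]
        exact ⟨mem_univ _, a, ha.1, hF⟩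
      · intro a ha a' ha' h
        simp only [coe_filter, Set.mem_ofPred_eq] at ha ha'
        exact hkinj a a' ha.2 ha'.2 h
    · set Si := S.filter (fun b => la b = i) with hSi
      set Ni := N.filter (fun b => lb b = i) with hNi
      have hSne : Si.Nonempty := card_pos.1 (by omega)
      obtain ⟨a, ha⟩ := hSne
      rw [hSi, mem_filter] at ha
      have h1 : (univ.filter (fun b => F a b)).card ≤ Ni.card := by
        refine card_le_card (fun b hb => ?_)
        simp only [mem_filter, mem_univ, true_and] at hb
        rw [hNi, mem_filter, hN, mem_filter, ← hl _ _ hb]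
        exact ⟨⟨mem_univ _, a, ha.1, hb⟩, ha.2⟩
      have h2 : ρ * n ≤ (Si.card : ℝ) :=
        (hA a (by rw [ha.2]; exact hi0)).trans (Nat.cast_le.2 (h1.trans hi.le))
      set LA := univ.filter (fun a => la a = i)
      set LB := univ.filter (fun b => lb b = i)
      have hsz : LA.card = LB.card := hsize i hi0
      have hSiLA : Si ⊆ LA := by
        intro x hx
        rw [hSi, mem_filter] at hx
        simpa [LA] using hx.2
      have hNiLB : Ni ⊆ LB := by
        intro x hx
        rw [hNi, mem_filter] at hx
        simpa [LB] using hx.2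
      have h3 : (LA \ Si).card < (LB \ Ni).card := by
        rw [card_sdiff_of_subset hSiLA, card_sdiff_of_subset hNiLB]
        have := card_le_card hSiLA
        omega
      obtain ⟨b, hb⟩ := card_pos.1 (show 0 < (LB \ Ni).card by omega)
      rw [mem_sdiff] at hb
      have hbi : lb b = i := by simpa [LB] using hb.1
      have hbN : b ∉ N := fun h => hb.2 (by rw [hNi, mem_filter]; exact ⟨h, hbi⟩)
      have h4 : (univ.filter (fun a => F a b)).card ≤ (LA \ Si).card := by
        refine card_le_card (fun x hx => ?_)
        simp only [mem_filter, mem_univ, true_and] at hx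
        rw [mem_sdiff]
        refine ⟨by simp [LA, hl _ _ hx, hbi], fun h => hbN ?_⟩
        rw [hSi, mem_filter] at h
        rw [hN, mem_filter]
        exact ⟨mem_univ _, x, h.1, hx⟩
      have h5 : ρ * n ≤ ((LB \ Ni).card : ℝ) :=
        (hB b (by rw [hbi]; exact hi0)).trans (Nat.cast_le.2 (h4.trans h3.le))
      have h6 := hprod _ _ h2 h5
      have h7 : (Si ×ˢ (LB \ Ni)).card ≤ (univ.filter (fun e : Fin n × Fin n => la e.1 ≠ 0 ∧
          la e.1 = lb e.2 ∧ ¬ F e.1 e.2)).card := by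
        refine card_le_card (fun e he => ?_)
        rw [mem_product, mem_sdiff, hSi, mem_filter] at he
        obtain ⟨⟨q1, q2⟩, q3, q4⟩ := he
        have q5 : lb e.2 = i := by simpa [LB] using q3
        rw [mem_filter]
        refine ⟨mem_univ _, by rw [q2]; exact hi0, by rw [q2, q5], fun hF => q4 ?_⟩
        rw [hNi, mem_filter, hN, mem_filter]
        exact ⟨⟨mem_univ _, e.1, q1, hF⟩, q5⟩
      have h8 : ((Si ×ˢ (LB \ Ni)).card : ℝ) ≤ _ := (Nat.cast_le.2 h7).trans hne
      have : 0 < ρ ^ 2 * (n:ℝ) ^ 2 := by positivity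
      linarith
  · intro M hM a ha
    set X := univ.filter (fun x => F a (M x)) with hX
    set Y := univ.filter (fun x => F x (M a)) with hY
    have h1 : ρ * n ≤ (X.card : ℝ) := by
      rw [hX, card_filter_perm M (fun y => F a y)]; exact hA a ha
    have h2 : ρ * n ≤ (Y.card : ℝ) := hB (M a) (by rw [← hl _ _ (hM a)]; exact ha)
    have h3 := hprod X Y h1 h2
    have hsub : X ×ˢ Y ⊆ univ.filter (fun e : Fin n × Fin n => F a (M e.1) ∧ F e.1 (M e.2) ∧ F e.2 (M a))
        ∪ univ.filter (fun e : Fin n × Fin n => la e.1 ≠ 0 ∧ la e.1 = lb (M e.2) ∧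
          ¬ F e.1 (M e.2)) := by
      rintro ⟨x, y⟩ he
      rw [mem_product, hX, hY, mem_filter, mem_filter] at he
      obtain ⟨⟨-, q1⟩, -, q2⟩ := he
      simp only [mem_union, mem_filter, mem_univ, true_and]
      dsimp only at q1 q2
      by_cases h : F x (M y)
      · exact Or.inl ⟨q1, h, q2⟩
      · refine Or.inr ⟨?_, ?_, h⟩
        · rw [hl _ _ (hM x), ← hl _ _ q1]; exact ha
        · rw [hl _ _ (hM x), ← hl _ _ q1, ← hl _ _ (hM y), hl _ _ q2, hl _ _ (hM a)]
    have h4 : (univ.filter (fun e : Fin n × Fin n => la e.1 ≠ 0 ∧ la e.1 = lb (M e.2) ∧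
          ¬ F e.1 (M e.2))).card ≤ (univ.filter (fun e : Fin n × Fin n => la e.1 ≠ 0 ∧
          la e.1 = lb e.2 ∧ ¬ F e.1 e.2)).card := by
      refine card_le_card_of_injOn (fun e => (e.1, M e.2)) ?_ ?_
      · intro e he
        simpa using he
      · rintro ⟨e1, e2⟩ _ ⟨e3, e4⟩ _ h
        simpa using h
    have h5 := (card_le_card hsub).trans (card_union_le _ _)
    have h6 := (Nat.cast_le (α := ℝ)).2 (h5.trans (Nat.add_le_add_left h4 _))
    push_cast at h6
    have h7 := h3.trans h6
    linarith

end
end RB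

namespace RB
section
open Classical Finset

theorem greedy {n : ℕ} (χ : Fin n → Fin n → ℕ) (H : Finset (Fin n × Fin n)) (D m : ℝ)
    (hD0 : 0 ≤ D) (hm0 : 0 ≤ m)
    (h1 : ∀ a, ((H.filter (fun e => e.1 = a)).card : ℝ) ≤ D)
    (h2 : ∀ b, ((H.filter (fun e => e.2 = b)).card : ℝ) ≤ D)
    (h3 : ∀ c, ((H.filter (fun e => χ e.1 e.2 = c)).card : ℝ) ≤ m)
    (d : ℕ) (h : (d:ℝ) * (2 * D + m) < H.card) :
    ∃ K ⊆ H, K.card = d ∧ ∀ e ∈ K, ∀ f ∈ K, e ≠ f →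
      e.1 ≠ f.1 ∧ e.2 ≠ f.2 ∧ χ e.1 e.2 ≠ χ f.1 f.2 := by
  suffices hs : ∀ k ≤ d, ∃ K ⊆ H, K.card = k ∧ ∀ e ∈ K, ∀ f ∈ K, e ≠ f →
      e.1 ≠ f.1 ∧ e.2 ≠ f.2 ∧ χ e.1 e.2 ≠ χ f.1 f.2 from hs d le_rfl
  intro k
  induction k with
  | zero => intro _; exact ⟨∅, by simp, by simp, by simp⟩
  | succ k ih =>
    intro hk
    obtain ⟨K, hKH, hKc, hK⟩ := ih (by omega)
    set Z := K.biUnion (fun e => (H.filter (fun f => f.1 = e.1)) ∪ (H.filter (fun f => f.2 = e.2))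
      ∪ (H.filter (fun f => χ f.1 f.2 = χ e.1 e.2))) with hZ
    have hZc : (Z.card : ℝ) ≤ (k:ℝ) * (2 * D + m) := by
      calc (Z.card : ℝ) ≤ ∑ e ∈ K, (2 * D + m) := by
            refine ((Nat.cast_le (α := ℝ)).2 card_biUnion_le).trans ?_
            push_cast
            refine sum_le_sum (fun e _ => ?_)
            have q1 := card_union_le ((H.filter (fun f => f.1 = e.1)) ∪ (H.filter (fun f => f.2 = e.2)))
              (H.filter (fun f => χ f.1 f.2 = χ e.1 e.2))
            have q2 := card_union_le (H.filter (fun f => f.1 = e.1)) (H.filter (fun f => f.2 = e.2))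
            have q3 := (Nat.cast_le (α := ℝ)).2 (q1.trans (Nat.add_le_add_right q2 _))
            push_cast at q3
            have := h1 e.1
            have := h2 e.2
            have := h3 (χ e.1 e.2)
            linarith
        _ = _ := by rw [sum_const, hKc, nsmul_eq_mul]
    have hlt : (Z.card : ℝ) < H.card := by
      refine hZc.trans_lt (lt_of_le_of_lt ?_ h)
      have : (k:ℝ) ≤ d := by exact_mod_cast (by omega : k ≤ d)
      exact mul_le_mul_of_nonneg_right this (by positivity)
    obtain ⟨f, hf, hfZ⟩ := exists_mem_notMem_of_card_lt_card (Nat.cast_lt.1 hlt)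
    have hfK : ∀ e ∈ K, f.1 ≠ e.1 ∧ f.2 ≠ e.2 ∧ χ f.1 f.2 ≠ χ e.1 e.2 := by
      intro e he
      by_contra hcon
      apply hfZ
      rw [hZ, mem_biUnion]
      refine ⟨e, he, ?_⟩
      simp only [mem_union, mem_filter]
      tauto
    have hfn : f ∉ K := fun h => (hfK f h).1 rfl
    refine ⟨insert f K, insert_subset hf hKH, by rw [card_insert_of_notMem hfn, hKc], ?_⟩
    intro e he e' he' hne
    rw [mem_insert] at he he'
    rcases he with rfl | he <;> rcases he' with rfl | he'
    · exact absurd rfl hne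
    · exact hfK e' he'
    · have := hfK e he
      exact ⟨this.1.symm, this.2.1.symm, this.2.2.symm⟩
    · have hfinal := hK e he e' he' hne
      exact hfinal

/-- The number of elements satisfying a predicate. -/
noncomputable def cnt {α : Type*} [Fintype α] (p : α → Prop) : ℕ :=
  (@Finset.filter α p (fun _ => Classical.propDecidable _) univ).card

theorem cnt_def {α : Type*} [Fintype α] (p : α → Prop) [DecidablePred p] :
    (univ.filter p).card = cnt p := by
  unfold cnt
  congr!

theorem cnt_mono {α : Type*} [Fintype α] {p q : α → Prop} (h : ∀ x, p x → q x) :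
    cnt p ≤ cnt q := by
  refine card_le_card (fun x hx => ?_)
  simp only [mem_filter, mem_univ, true_and] at hx ⊢
  exact h x hx

theorem cnt_monoR {α : Type*} [Fintype α] {p q : α → Prop} (h : ∀ x, p x → q x) :
    (cnt p : ℝ) ≤ cnt q := Nat.cast_le.2 (cnt_mono h)

theorem cnt_congr {α : Type*} [Fintype α] {p q : α → Prop} (h : ∀ x, p x ↔ q x) :
    cnt p = cnt q := by
  rw [show p = q from funext (fun x => propext (h x))]

theorem cnt_or {α : Type*} [Fintype α] {p q r : α → Prop} (h : ∀ x, p x → q x ∨ r x) :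
    (cnt p : ℝ) ≤ cnt q + cnt r := by
  have h1 : cnt p ≤ cnt q + cnt r := by
    refine (card_le_card (fun x hx => ?_)).trans (card_union_le _ _)
    simp only [mem_union, mem_filter, mem_univ, true_and] at hx ⊢
    exact h x hx
  exact_mod_cast h1

theorem cnt_or3 {α : Type*} [Fintype α] {p q r s : α → Prop} (h : ∀ x, p x → q x ∨ r x ∨ s x) :
    (cnt p : ℝ) ≤ cnt q + cnt r + cnt s := by
  have h1 := cnt_or (p := p) (q := q) (r := fun x => r x ∨ s x) h
  have h2 := cnt_or (p := fun x => r x ∨ s x) (q := r) (r := s) (fun x h => h)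
  linarith

theorem cnt_mem {α : Type*} [Fintype α] (S : Finset α) : cnt (fun x => x ∈ S) = S.card := by
  unfold cnt
  congr 1
  ext x; simp

theorem cnt_prod {n : ℕ} (R : Fin n → Fin n → Prop) :
    cnt (fun e : Fin n × Fin n => R e.1 e.2) = ∑ a, cnt (fun b => R a b) := by
  unfold cnt
  rw [card_eq_sum_card_fiberwise (f := Prod.fst) (t := univ) (fun b _ => mem_coe.2 (mem_univ _))]
  refine sum_congr rfl (fun a _ => ?_)
  refine card_bij (fun e _ => e.2) ?_ ?_ ?_
  · rintro ⟨e1, e2⟩ he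
    simp only [mem_filter, mem_univ, true_and] at he ⊢
    rw [← he.2]; exact he.1
  · rintro ⟨e1, e2⟩ he ⟨f1, f2⟩ hf h
    simp only [mem_filter, mem_univ, true_and] at he hf h
    rw [he.2, hf.2, h]
  · intro b hb
    exact ⟨(a, b), by simpa using hb, rfl⟩

theorem cnt_prod_swap {n : ℕ} (R : Fin n → Fin n → Prop) :
    cnt (fun e : Fin n × Fin n => R e.1 e.2) = cnt (fun e : Fin n × Fin n => R e.2 e.1) := by
  unfold cnt
  refine card_bij (fun e _ => (e.2, e.1)) ?_ ?_ ?_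
  · rintro ⟨e1, e2⟩ he
    simpa using he
  · rintro ⟨e1, e2⟩ he ⟨f1, f2⟩ hf h
    simp at h ⊢
    tauto
  · rintro ⟨e1, e2⟩ he
    exact ⟨(e2, e1), by simpa using he, rfl⟩

theorem cnt_prod' {n : ℕ} (R : Fin n → Fin n → Prop) :
    cnt (fun e : Fin n × Fin n => R e.1 e.2) = ∑ b, cnt (fun a => R a b) := by
  rw [cnt_prod_swap, cnt_prod (fun b a => R a b)]

structure Inv {n : ℕ} (E : Fin n → Fin n → Prop) (P Q : Finset (Fin n)) (d : ℕ) : Prop where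
  hcard : P.card = Q.card + d
  hA1 : ∀ a ∈ P, (n:ℝ) / 100 + d ≤ (cnt (fun b => b ∈ Q ∧ E a b) : ℝ)
  hA2 : ∀ a ∉ P, (n:ℝ) / 100 + d ≤ (cnt (fun b => b ∉ Q ∧ E a b) : ℝ)
  hB1 : ∀ b ∈ Q, (n:ℝ) / 100 + d ≤ (cnt (fun a => a ∈ P ∧ E a b) : ℝ)
  hB2 : ∀ b ∉ Q, (n:ℝ) / 100 + d ≤ (cnt (fun a => a ∉ P ∧ E a b) : ℝ)
  hne : (cnt (fun e : Fin n × Fin n => (e.1 ∈ P ↔ e.2 ∈ Q) ∧ ¬ E e.1 e.2) : ℝ)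
    + d * n ≤ (n:ℝ) ^ 2 / 10 ^ 6
  hP : n + 4 * d ≤ 4 * P.card
  hQ : 4 * Q.card + 4 * d ≤ 3 * n

set_option maxHeartbeats 1000000 in
theorem finish {n : ℕ} (E : Fin n → Fin n → Prop) (χ : Fin n → Fin n → ℕ) (hn : 10 ^ 10 ≤ n)
    (hχ : ∀ col, (cnt (fun e : Fin n × Fin n => E e.1 e.2 ∧ χ e.1 e.2 = col) : ℝ)
      ≤ 1 / 10 ^ 19 * n) (P Q : Finset (Fin n)) (d : ℕ) (hI : Inv E P Q d)
    (K : Finset (Fin n × Fin n)) (hKc : K.card = d)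
    (hK : ∀ e ∈ K, ∀ f ∈ K, e ≠ f → e.1 ≠ f.1 ∧ e.2 ≠ f.2 ∧ χ e.1 e.2 ≠ χ f.1 f.2)
    (T : Finset ℕ) (hKE : ∀ e ∈ K, e.1 ∈ P ∧ e.2 ∉ Q ∧ E e.1 e.2 ∧ χ e.1 e.2 ∈ T)
    (hTA : ∀ a, (cnt (fun b => (a ∈ P ↔ b ∈ Q) ∧ E a b ∧ χ a b ∈ T) : ℝ)
      ≤ 2 / 10 ^ 6 * n)
    (hTB : ∀ b, (cnt (fun a => (a ∈ P ↔ b ∈ Q) ∧ E a b ∧ χ a b ∈ T) : ℝ)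
      ≤ 2 / 10 ^ 6 * n) :
    ∃ M : Equiv.Perm (Fin n), (∀ x, E x (M x)) ∧ ∀ x x', χ x (M x) = χ x' (M x') → x = x' := by
  have hnR : (10:ℝ) ^ 10 ≤ n := by exact_mod_cast hn
  set K1 := K.image Prod.fst with hK1
  set K2 := K.image Prod.snd with hK2
  have K1c : K1.card = d := by
    rw [hK1, card_image_of_injOn, hKc]
    intro e he f hf h
    by_contra hne
    exact (hK e he f hf hne).1 h
  have K2c : K2.card = d := by
    rw [hK2, card_image_of_injOn, hKc]
    intro e he f hf h
    by_contra hne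
    exact (hK e he f hf hne).2.1 h
  have K1P : ∀ a ∈ K1, a ∈ P := by
    intro a ha
    rw [hK1, mem_image] at ha
    obtain ⟨e, he, rfl⟩ := ha
    exact (hKE e he).1
  have K2Q : ∀ b ∈ K2, b ∉ Q := by
    intro a ha
    rw [hK2, mem_image] at ha
    obtain ⟨e, he, rfl⟩ := ha
    exact (hKE e he).2.1
  have mK1 : ∀ a b, (a, b) ∈ K → a ∈ K1 := fun a b h => by
    rw [hK1, mem_image]; exact ⟨_, h, rfl⟩
  have mK2 : ∀ a b, (a, b) ∈ K → b ∈ K2 := fun a b h => by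
    rw [hK2, mem_image]; exact ⟨_, h, rfl⟩
  set F : Fin n → Fin n → Prop := fun a b => (a, b) ∈ K ∨ (a ∉ K1 ∧ b ∉ K2 ∧ (a ∈ P ↔ b ∈ Q) ∧
    E a b ∧ χ a b ∉ T) with hF
  have hFE : ∀ a b, F a b → E a b := by
    rintro a b (h | h)
    · exact (hKE _ h).2.2.1
    · exact h.2.2.2.1
  set la : Fin n → Fin 3 := fun a => if a ∈ K1 then 0 else if a ∈ P then 1 else 2 with hla
  set lb : Fin n → Fin 3 := fun a => if a ∈ K2 then 0 else if a ∈ Q then 1 else 2 with hlb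
  have la0 : ∀ a, la a = 0 ↔ a ∈ K1 := by
    intro a; by_cases h1 : a ∈ K1 <;> by_cases h2 : a ∈ P <;> simp [hla, h1, h2]
  have lb0 : ∀ a, lb a = 0 ↔ a ∈ K2 := by
    intro a; by_cases h1 : a ∈ K2 <;> by_cases h2 : a ∈ Q <;> simp [hlb, h1, h2]
  have hkex : ∀ a, ∃ b, a ∈ K1 → (a, b) ∈ K := by
    intro a
    by_cases h : a ∈ K1
    · have h' := h
      rw [hK1, mem_image] at h'
      obtain ⟨e, he, rfl⟩ := h'
      exact ⟨e.2, fun _ => he⟩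
    · exact ⟨a, fun h' => absurd h' h⟩
  choose k hk using hkex
  have key := cluster F χ (1/200) (1/10^19) (by norm_num) (by norm_num) (by norm_num)
    (by norm_num) (by linarith) ?_ la lb ?_ ?_ ?_
    ?_ ?_ ?_ k ?_ ?_
  · obtain ⟨M, hM, hM2⟩ := key
    exact ⟨M, fun x => hFE _ _ (hM x), hM2⟩
  · intro col
    simp only [cnt_def]
    exact (cnt_monoR (fun e he => ⟨hFE _ _ he.1, he.2⟩)).trans (hχ col)
  · rintro a b (h | ⟨h1, h2, h3, -⟩)
    · rw [(la0 a).2 (mK1 _ _ h), (lb0 b).2 (mK2 _ _ h)]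
    · simp only [hla, hlb, if_neg h1, if_neg h2, h3]
  · intro a b a' b' ha hb h h' hc h0
    rw [la0] at h0
    rcases h with h | h
    · rcases h' with h' | h'
      · exact (hK _ h _ h' (by simp [ha])).2.2 hc
      · apply h'.2.2.2.2
        rw [← hc]; exact (hKE _ h).2.2.2
    · exact h.1 h0
  · have hPn := card_le_univ P
    have hQn := card_le_univ Q
    rw [Fintype.card_fin] at hPn hQn
    have hcd := hI.hcard
    have e1 : univ.filter (fun a => la a = 1) = P \ K1 := by
      ext a; by_cases h1 : a ∈ K1 <;> by_cases h2 : a ∈ P <;> simp [hla, h1, h2]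
    have e2 : univ.filter (fun a => la a = 2) = Pᶜ := by
      ext a
      by_cases h1 : a ∈ K1
      · simp [hla, h1, K1P a h1]
      · by_cases h2 : a ∈ P <;> simp [hla, h1, h2]
    have e3 : univ.filter (fun a => lb a = 1) = Q := by
      ext a
      by_cases h1 : a ∈ K2
      · simp [hlb, h1, K2Q a h1]
      · by_cases h2 : a ∈ Q <;> simp [hlb, h1, h2]
    have e4 : univ.filter (fun a => lb a = 2) = Qᶜ \ K2 := by
      ext a; by_cases h1 : a ∈ K2 <;> by_cases h2 : a ∈ Q <;> simp [hlb, h1, h2]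
    intro i hi
    have hi2 : i = 1 ∨ i = 2 := by omega
    rcases hi2 with rfl | rfl
    · rw [e1, e3, card_sdiff_of_subset (fun a ha => K1P a ha)]
      omega
    · rw [e2, e4, card_sdiff_of_subset (fun a ha => mem_compl.2 (K2Q a ha)), card_compl, card_compl,
        Fintype.card_fin]
      omega
  · simp only [cnt_def]
    intro a ha
    replace ha : a ∉ K1 := by rwa [← la0]
    have h1 : (n:ℝ)/100 + d ≤ (cnt (fun b => (a ∈ P ↔ b ∈ Q) ∧ E a b) : ℝ) := by
      by_cases hP : a ∈ P
      · simpa [hP] using hI.hA1 a hP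
      · simpa [hP] using hI.hA2 a hP
    have h4 := cnt_or3 (p := fun b => (a ∈ P ↔ b ∈ Q) ∧ E a b) (q := fun b => F a b)
      (r := fun b => (a ∈ P ↔ b ∈ Q) ∧ E a b ∧ χ a b ∈ T) (s := fun b => b ∈ K2)
      (by intro b hb; simp only [hF]; tauto)
    rw [cnt_mem, K2c] at h4
    have := hTA a
    linarith
  · simp only [cnt_def]
    intro b hb
    replace hb : b ∉ K2 := by rwa [← lb0]
    have h1 : (n:ℝ)/100 + d ≤ (cnt (fun a => (a ∈ P ↔ b ∈ Q) ∧ E a b) : ℝ) := by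
      by_cases hP : b ∈ Q
      · simpa [hP] using hI.hB1 b hP
      · simpa [hP] using hI.hB2 b hP
    have h4 := cnt_or3 (p := fun a => (a ∈ P ↔ b ∈ Q) ∧ E a b) (q := fun a => F a b)
      (r := fun a => (a ∈ P ↔ b ∈ Q) ∧ E a b ∧ χ a b ∈ T) (s := fun b => b ∈ K1)
      (by intro b hb; simp only [hF]; tauto)
    rw [cnt_mem, K1c] at h4
    have := hTB b
    linarith
  · simp only [cnt_def]
    have h4 := cnt_or (p := fun e : Fin n × Fin n => la e.1 ≠ 0 ∧ la e.1 = lb e.2 ∧ ¬ F e.1 e.2)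
      (q := fun e : Fin n × Fin n => (e.1 ∈ P ↔ e.2 ∈ Q) ∧ ¬ E e.1 e.2)
      (r := fun e : Fin n × Fin n => (e.1 ∈ P ↔ e.2 ∈ Q) ∧ E e.1 e.2 ∧ χ e.1 e.2 ∈ T) (by
      rintro ⟨a, b⟩ he
      simp only [hF] at he ⊢
      obtain ⟨q1, q2, q3⟩ := he
      have q4 : lb b ≠ 0 := by rw [← q2]; exact q1
      rw [Ne, la0] at q1
      rw [Ne, lb0] at q4
      have q5 : a ∈ P ↔ b ∈ Q := by
        simp only [hla, hlb, if_neg q1, if_neg q4] at q2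
        by_cases h1 : a ∈ P <;> by_cases h2 : b ∈ Q <;> simp [h1, h2] at q2 ⊢
      tauto)
    rw [cnt_prod (fun a b => (a ∈ P ↔ b ∈ Q) ∧ E a b ∧ χ a b ∈ T)] at h4
    push_cast at h4
    have h6 : ∑ a, (cnt (fun b => (a ∈ P ↔ b ∈ Q) ∧ E a b ∧ χ a b ∈ T) : ℝ) ≤
        ∑ a : Fin n, 2 / 10 ^ 6 * (n:ℝ) := sum_le_sum (fun a _ => hTA a)
    rw [sum_const, card_univ, Fintype.card_fin, nsmul_eq_mul] at h6
    have h7 := hI.hne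
    have h8 : (0:ℝ) ≤ d * n := by positivity
    have h9 : (0:ℝ) ≤ (n:ℝ)^2 := by positivity
    refine h4.trans ?_
    nlinarith
  · intro a ha
    exact Or.inl (hk a ((la0 a).1 ha))
  · intro a a' ha ha' h
    by_contra hne
    have q1 := hk a ((la0 a).1 ha)
    have q2 := hk a' ((la0 a').1 ha')
    exact (hK _ q1 _ q2 (by simp [hne])).2.1 h

end
end RB

namespace RB
section
open Classical Finset

theorem cnt_sum_T {α : Type*} [Fintype α] (p : α → Prop) (f : α → ℕ) (T : Finset ℕ) :
    ∑ c ∈ T, cnt (fun x => p x ∧ f x = c) = cnt (fun x => p x ∧ f x ∈ T) := by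
  have h := card_eq_sum_card_fiberwise (s := univ.filter (fun x => p x ∧ f x ∈ T)) (f := f) (t := T)
    (by intro x hx; simp only [coe_filter, mem_univ, true_and, Set.mem_ofPred_eq] at hx; exact hx.2)
  rw [cnt_def] at h
  rw [h]
  refine sum_congr rfl (fun c hc => ?_)
  unfold cnt
  congr 1
  ext x
  simp only [mem_filter, mem_univ, true_and]
  constructor
  · rintro ⟨h1, h2⟩; exact ⟨⟨h1, by rw [h2]; exact hc⟩, h2⟩
  · rintro ⟨⟨h1, -⟩, h2⟩; exact ⟨h1, h2⟩

theorem cnt_le_card {α : Type*} [Fintype α] (p : α → Prop) : cnt p ≤ Fintype.card α := by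
  unfold cnt; exact card_le_univ _

theorem cnt_zero {α : Type*} [Fintype α] {p : α → Prop} (h : ∀ x, ¬ p x) : cnt p = 0 := by
  unfold cnt
  rw [card_eq_zero, filter_eq_empty_iff]
  intro x _
  exact h x

theorem card_le_cnt {α β : Type*} [Fintype β] (S : Finset α) (p : β → Prop) (f : α → β)
    (h : ∀ x ∈ S, p (f x)) (hf : ∀ x ∈ S, ∀ y ∈ S, f x = f y → x = y) : S.card ≤ cnt p := by
  rw [← cnt_def]
  refine card_le_card_of_injOn f ?_ ?_
  · intro x hx
    rw [mem_coe, mem_filter]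
    exact ⟨mem_univ _, h x hx⟩
  · intro x hx y hy hxy
    exact hf x hx y hy hxy

theorem sparsify {n : ℕ} (χ : Fin n → Fin n → ℕ) (S R : Fin n → Fin n → Prop) (m p : ℝ)
    (hm : 0 < m) (hp0 : 0 ≤ p) (hp1 : p ≤ 1)
    (hS : ∀ col, (cnt (fun e : Fin n × Fin n => S e.1 e.2 ∧ χ e.1 e.2 = col) : ℝ) ≤ m)
    (hR : ∀ col, (cnt (fun e : Fin n × Fin n => R e.1 e.2 ∧ χ e.1 e.2 = col) : ℝ) ≤ m) :
    ∃ T : Finset ℕ,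
      (∀ a, |(cnt (fun b => S a b ∧ χ a b ∈ T) : ℝ) - p * cnt (fun b => S a b)| ≤ 5 * m) ∧
      (∀ b, |(cnt (fun a => S a b ∧ χ a b ∈ T) : ℝ) - p * cnt (fun a => S a b)| ≤ 5 * m) ∧
      (∀ a, |(cnt (fun b => R a b ∧ χ a b ∈ T) : ℝ) - p * cnt (fun b => R a b)| ≤ 5 * m) ∧
      (∀ b, |(cnt (fun a => R a b ∧ χ a b ∈ T) : ℝ) - p * cnt (fun a => R a b)| ≤ 5 * m) ∧
      |(cnt (fun e : Fin n × Fin n => R e.1 e.2 ∧ χ e.1 e.2 ∈ T) : ℝ) -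
        p * cnt (fun e : Fin n × Fin n => R e.1 e.2)| ≤ 5 * m := by
  set C : Finset ℕ := univ.image (fun e : Fin n × Fin n => χ e.1 e.2) with hC
  have hCm : ∀ a b, χ a b ∈ C := fun a b => mem_image.2 ⟨(a, b), mem_univ _, rfl⟩
  let w : (Fin n ⊕ Fin n ⊕ Fin n ⊕ Fin n ⊕ Unit) → ℕ → ℝ :=
    Sum.elim (fun a c => (cnt (fun b => S a b ∧ χ a b = c) : ℝ))
      (Sum.elim (fun b c => (cnt (fun a => S a b ∧ χ a b = c) : ℝ))
        (Sum.elim (fun a c => (cnt (fun b => R a b ∧ χ a b = c) : ℝ))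
          (Sum.elim (fun b c => (cnt (fun a => R a b ∧ χ a b = c) : ℝ))
            (fun _ c => (cnt (fun e : Fin n × Fin n => R e.1 e.2 ∧ χ e.1 e.2 = c) : ℝ)))))
  obtain ⟨T, -, hT⟩ := beck_fiala C w (by
      rintro (i | i | i | i | i) c <;> exact Nat.cast_nonneg _) (5 * m) (by linarith) (by
      intro c
      simp only [Fintype.sum_sum_type, w, Sum.elim_inl, Sum.elim_inr, univ_unique, sum_singleton]
      have e1 := cnt_prod (fun a b => S a b ∧ χ a b = c)
      have e2 := cnt_prod' (fun a b => S a b ∧ χ a b = c)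
      have e3 := cnt_prod (fun a b => R a b ∧ χ a b = c)
      have e4 := cnt_prod' (fun a b => R a b ∧ χ a b = c)
      rw [← Nat.cast_sum, ← Nat.cast_sum, ← Nat.cast_sum, ← Nat.cast_sum, ← e1, ← e2, ← e3, ← e4]
      have := hS c
      have := hR c
      linarith) p hp0 hp1
  refine ⟨T, fun a => ?_, fun b => ?_, fun a => ?_, fun b => ?_, ?_⟩
  · have h := hT (Sum.inl a)
    simp only [w, Sum.elim_inl, ← Nat.cast_sum, cnt_sum_T, hCm, and_true] at h
    exact h
  · have h := hT (Sum.inr (Sum.inl b))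
    simp only [w, Sum.elim_inl, Sum.elim_inr, ← Nat.cast_sum, cnt_sum_T, hCm, and_true] at h
    exact h
  · have h := hT (Sum.inr (Sum.inr (Sum.inl a)))
    simp only [w, Sum.elim_inl, Sum.elim_inr, ← Nat.cast_sum, cnt_sum_T, hCm, and_true] at h
    exact h
  · have h := hT (Sum.inr (Sum.inr (Sum.inr (Sum.inl b))))
    simp only [w, Sum.elim_inl, Sum.elim_inr, ← Nat.cast_sum, cnt_sum_T, hCm, and_true] at h
    exact h
  · have h := hT (Sum.inr (Sum.inr (Sum.inr (Sum.inr ()))))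
    simp only [w, Sum.elim_inr, ← Nat.cast_sum, cnt_sum_T, hCm, and_true] at h
    exact h

theorem cnt_split {α : Type*} [Fintype α] (p q : α → Prop) :
    (cnt p : ℝ) = cnt (fun x => q x ∧ p x) + cnt (fun x => ¬ q x ∧ p x) := by
  have h := card_filter_add_card_filter_not (s := univ.filter p) q
  rw [filter_filter, filter_filter, cnt_def, cnt_def, cnt_def] at h
  rw [← h]; push_cast
  rw [cnt_congr (p := fun x => p x ∧ q x) (fun x => and_comm),
    cnt_congr (p := fun x => p x ∧ ¬ q x) (fun x => and_comm)]

theorem cnt_notmem {n : ℕ} (S : Finset (Fin n)) : (cnt (fun x => x ∉ S) : ℝ) = n - S.card := by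
  have h := cnt_split (fun _ : Fin n => True) (fun x => x ∈ S)
  simp only [and_true] at h
  rw [cnt_mem] at h
  have h2 : cnt (fun _ : Fin n => True) = n := by
    unfold cnt; simp
  rw [h2] at h
  linarith

set_option maxHeartbeats 1000000 in
theorem pick {n : ℕ} (E : Fin n → Fin n → Prop) (χ : Fin n → Fin n → ℕ) (hn : 10 ^ 10 ≤ n)
    (hχ : ∀ col, (cnt (fun e : Fin n × Fin n => E e.1 e.2 ∧ χ e.1 e.2 = col) : ℝ)
      ≤ 1 / 10 ^ 19 * n)
    (hA : ∀ a, n ≤ 2 * cnt (fun b => E a b)) (hB : ∀ b, n ≤ 2 * cnt (fun a => E a b))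
    (P Q : Finset (Fin n)) (d : ℕ) (hd : 1 ≤ d) (hI : Inv E P Q d)
    (hP : ∀ a ∈ P, (cnt (fun b => b ∉ Q ∧ E a b) : ℝ) ≤ n / 50)
    (hQ : ∀ b ∉ Q, (cnt (fun a => a ∈ P ∧ E a b) : ℝ) ≤ n / 50) :
    ∃ M : Equiv.Perm (Fin n), (∀ x, E x (M x)) ∧ ∀ x x', χ x (M x) = χ x' (M x') → x = x' := by
  have hnR : (10:ℝ) ^ 10 ≤ n := by exact_mod_cast hn
  have hn0 : (0:ℝ) < n := by linarith
  have hdR : (1:ℝ) ≤ d := by exact_mod_cast hd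
  set R : Fin n → Fin n → Prop := fun a b => a ∈ P ∧ b ∉ Q ∧ E a b with hRdef
  have hs4 : (n:ℝ) ≤ 4 * P.card := by
    have h := hI.hP
    have : n ≤ 4 * P.card := by omega
    exact_mod_cast this
  have ht4 : 4 * (Q.card:ℝ) ≤ 3 * n := by
    have h := hI.hQ
    have : 4 * Q.card ≤ 3 * n := by omega
    exact_mod_cast this
  have hst : (P.card : ℝ) = Q.card + d := by exact_mod_cast hI.hcard
  have hdn : (d:ℝ) ≤ n / 10 ^ 6 := by
    have h := hI.hne
    have h1 : (d:ℝ) * n ≤ n / 10 ^ 6 * n := by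
      have : (0:ℝ) ≤ (cnt (fun e : Fin n × Fin n => (e.1 ∈ P ↔ e.2 ∈ Q) ∧ ¬ E e.1 e.2) : ℝ) :=
        Nat.cast_nonneg _
      calc (d:ℝ) * n ≤ n ^ 2 / 10 ^ 6 := by linarith
        _ = _ := by ring
    exact le_of_mul_le_mul_right h1 hn0
  have h1 : (P.card : ℝ) * (n / 2 - Q.card) ≤ cnt (fun e : Fin n × Fin n => R e.1 e.2) := by
    rw [cnt_prod R]; push_cast
    calc (P.card : ℝ) * (n / 2 - Q.card) = ∑ a ∈ P, ((n:ℝ) / 2 - Q.card) := by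
          rw [sum_const, nsmul_eq_mul]
      _ ≤ ∑ a ∈ P, (cnt (fun b => R a b) : ℝ) := by
          refine sum_le_sum (fun a ha => ?_)
          have q1 := cnt_split (fun b => E a b) (fun b => b ∈ Q)
          have q2 : (cnt (fun b => b ∈ Q ∧ E a b) : ℝ) ≤ Q.card := by
            rw [← cnt_mem]; exact cnt_monoR (fun b hb => hb.1)
          have q3 : (n:ℝ) ≤ 2 * cnt (fun b => E a b) := by exact_mod_cast hA a
          have q4 : cnt (fun b => R a b) = cnt (fun b => b ∉ Q ∧ E a b) :=
            cnt_congr (fun b => by simp [hRdef, ha])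
          rw [q4]
          linarith
      _ ≤ ∑ a, (cnt (fun b => R a b) : ℝ) :=
          sum_le_sum_of_subset_of_nonneg (subset_univ _) (fun _ _ _ => Nat.cast_nonneg _)
  have h2 : ((n:ℝ) - Q.card) * (P.card - n / 2) ≤ cnt (fun e : Fin n × Fin n => R e.1 e.2) := by
    rw [cnt_prod' R]; push_cast
    calc ((n:ℝ) - Q.card) * (P.card - n / 2) = ∑ b ∈ Qᶜ, ((P.card:ℝ) - n / 2) := by
          rw [sum_const, nsmul_eq_mul, ← cnt_notmem, ← cnt_mem Qᶜ,
            cnt_congr (p := fun x => x ∉ Q) (q := fun x => x ∈ Qᶜ) (fun x => by simp)]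
      _ ≤ ∑ b ∈ Qᶜ, (cnt (fun a => R a b) : ℝ) := by
          refine sum_le_sum (fun b hb => ?_)
          rw [mem_compl] at hb
          have q1 := cnt_split (fun a => E a b) (fun a => a ∈ P)
          have q2 : (cnt (fun a => a ∉ P ∧ E a b) : ℝ) ≤ n - P.card := by
            rw [← cnt_notmem]; exact cnt_monoR (fun b hb => hb.1)
          have q3 : (n:ℝ) ≤ 2 * cnt (fun a => E a b) := by exact_mod_cast hB b
          have q4 : cnt (fun a => R a b) = cnt (fun a => a ∈ P ∧ E a b) :=
            cnt_congr (fun a => by simp [hRdef, hb])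
          rw [q4]
          linarith
      _ ≤ ∑ b, (cnt (fun a => R a b) : ℝ) :=
          sum_le_sum_of_subset_of_nonneg (subset_univ _) (fun _ _ _ => Nat.cast_nonneg _)
  have hH : (d:ℝ) * n / 8 ≤ cnt (fun e : Fin n × Fin n => R e.1 e.2) := by
    by_cases hc : (d:ℝ) / 2 ≤ n / 2 - Q.card
    · refine le_trans ?_ h1
      calc (d:ℝ) * n / 8 = (n / 4) * (d / 2) := by ring
        _ ≤ _ := mul_le_mul (by linarith) hc (by positivity) (by linarith)
    · refine le_trans ?_ h2
      calc (d:ℝ) * n / 8 = (n / 4) * (d / 2) := by ring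
        _ ≤ _ := mul_le_mul (by linarith) (by linarith) (by positivity) (by linarith)
  obtain ⟨T, t1, t2, t3, t4, t5⟩ := sparsify χ (fun a b => (a ∈ P ↔ b ∈ Q) ∧ E a b) R
    (1 / 10 ^ 19 * n) (1 / 10 ^ 6) (by positivity) (by norm_num) (by norm_num)
    (fun col => (cnt_monoR (fun e he => ⟨he.1.2, he.2⟩)).trans (hχ col))
    (fun col => (cnt_monoR (fun e he => ⟨he.1.2.2, he.2⟩)).trans (hχ col))
  set H : Finset (Fin n × Fin n) := univ.filter (fun e => R e.1 e.2 ∧ χ e.1 e.2 ∈ T) with hHdef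
  have hHm : ∀ e ∈ H, R e.1 e.2 ∧ χ e.1 e.2 ∈ T := by
    intro e he; rw [hHdef, mem_filter] at he; exact he.2
  have hHc : (H.card : ℝ) = cnt (fun e : Fin n × Fin n => R e.1 e.2 ∧ χ e.1 e.2 ∈ T) := by
    rw [hHdef, cnt_def]
  obtain ⟨K, hKH, hKc, hK⟩ := greedy χ H (3 / 10 ^ 8 * n) (1 / 10 ^ 19 * n) (by positivity)
    (by positivity) (by
      intro a
      have q1 : (H.filter (fun e => e.1 = a)).card ≤ cnt (fun b => R a b ∧ χ a b ∈ T) := by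
        refine card_le_cnt _ _ Prod.snd ?_ ?_
        · rintro ⟨e1, e2⟩ he
          rw [mem_filter] at he
          obtain ⟨he, rfl⟩ := he
          exact hHm _ he
        · rintro ⟨e1, e2⟩ he ⟨f1, f2⟩ hf h
          rw [mem_filter] at he hf
          exact Prod.ext (he.2.trans hf.2.symm) h
      refine ((Nat.cast_le (α := ℝ)).2 q1).trans ?_
      have q2 := (abs_le.1 (t3 a)).2
      have q3 : (cnt (fun b => R a b) : ℝ) ≤ n / 50 := by
        by_cases ha : a ∈ P
        · exact (cnt_monoR (fun b hb => hb.2)).trans (hP a ha)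
        · have : cnt (fun b => R a b) = 0 := cnt_zero (fun x hx => ha hx.1)
          rw [this]; push_cast; positivity
      linarith) (by
      intro b
      have q1 : (H.filter (fun e => e.2 = b)).card ≤ cnt (fun a => R a b ∧ χ a b ∈ T) := by
        refine card_le_cnt _ _ Prod.fst ?_ ?_
        · rintro ⟨e1, e2⟩ he
          rw [mem_filter] at he
          obtain ⟨he, rfl⟩ := he
          exact hHm _ he
        · rintro ⟨e1, e2⟩ he ⟨f1, f2⟩ hf h
          rw [mem_filter] at he hf
          exact Prod.ext h (he.2.trans hf.2.symm)
      refine ((Nat.cast_le (α := ℝ)).2 q1).trans ?_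
      have q2 := (abs_le.1 (t4 b)).2
      have q3 : (cnt (fun a => R a b) : ℝ) ≤ n / 50 := by
        by_cases hb : b ∉ Q
        · exact (cnt_monoR (fun a ha => ⟨ha.1, ha.2.2⟩)).trans (hQ b hb)
        · have : cnt (fun a => R a b) = 0 := cnt_zero (fun x hx => hb hx.2.1)
          rw [this]; push_cast; positivity
      linarith) (by
      intro c
      refine le_trans ?_ (hχ c)
      refine Nat.cast_le.2 (card_le_cnt _ _ id (fun e he => ?_) (fun x _ y _ h => h))
      rw [mem_filter] at he
      exact ⟨(hHm e he.1).1.2.2, he.2⟩) d (by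
      rw [hHc]
      have q := (abs_le.1 t5).1
      have hdn : (n:ℝ) ≤ d * n := by nlinarith
      have e1 : (d:ℝ) * (2 * (3 / 10 ^ 8 * n) + 1 / 10 ^ 19 * n) =
        (2 * (3 / 10 ^ 8) + 1 / 10 ^ 19) * (d * n) := by ring
      rw [e1]
      rw [mul_div_assoc] at hH
      linarith [mul_div_assoc (d:ℝ) n 8])
  refine finish E χ hn hχ P Q d hI K hKc hK T ?_ ?_ ?_
  · intro e he
    have := hHm e (hKH he)
    exact ⟨this.1.1, this.1.2.1, this.1.2.2, this.2⟩
  · intro a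
    have q := (abs_le.1 (t1 a)).2
    have q2 : (cnt (fun b => (a ∈ P ↔ b ∈ Q) ∧ E a b) : ℝ) ≤ n := by
      have := cnt_le_card (fun b => (a ∈ P ↔ b ∈ Q) ∧ E a b)
      rw [Fintype.card_fin] at this
      exact_mod_cast this
    simp only [and_assoc] at q
    linarith
  · intro b
    have q := (abs_le.1 (t2 b)).2
    have q2 : (cnt (fun a => (a ∈ P ↔ b ∈ Q) ∧ E a b) : ℝ) ≤ n := by
      have := cnt_le_card (fun a => (a ∈ P ↔ b ∈ Q) ∧ E a b)
      rw [Fintype.card_fin] at this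
      exact_mod_cast this
    simp only [and_assoc] at q
    linarith

end
end RB

namespace RB
section
open Classical Finset

theorem cnt_le_of_inj {α β : Type*} [Fintype α] [Fintype β] (p : α → Prop) (f : α → β)
    (hf : ∀ x y, p x → p y → f x = f y → x = y) : cnt p ≤ Fintype.card β := by
  rw [← cnt_def, ← card_univ]
  refine card_le_card_of_injOn f (fun _ _ => mem_coe.2 (mem_univ _)) ?_
  intro x hx y hy h
  rw [mem_coe, mem_filter] at hx hy
  exact hf x y hx.2 hy.2 h

theorem cnt_fst {n : ℕ} (a : Fin n) : (cnt (fun e : Fin n × Fin n => e.1 = a) : ℝ) ≤ n := by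
  have h := cnt_le_of_inj (fun e : Fin n × Fin n => e.1 = a) Prod.snd
    (fun x y hx hy h => Prod.ext (hx.trans hy.symm) h)
  rw [Fintype.card_fin] at h
  exact_mod_cast h

theorem cnt_snd {n : ℕ} (a : Fin n) : (cnt (fun e : Fin n × Fin n => e.2 = a) : ℝ) ≤ n := by
  have h := cnt_le_of_inj (fun e : Fin n × Fin n => e.2 = a) Prod.fst
    (fun x y hx hy h => Prod.ext h (hx.trans hy.symm))
  rw [Fintype.card_fin] at h
  exact_mod_cast h

theorem cnt_single {n : ℕ} (a : Fin n) : (cnt (fun x : Fin n => x = a) : ℝ) ≤ 1 := by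
  have h := cnt_le_of_inj (fun x : Fin n => x = a) (fun _ => ())
    (fun x y hx hy h => hx.trans hy.symm)
  rw [Fintype.card_unit] at h
  exact_mod_cast h

theorem inv_erase {n : ℕ} {E : Fin n → Fin n → Prop} {P Q : Finset (Fin n)} {d : ℕ}
    (hI : Inv E P Q (d + 1)) (a : Fin n) (ha : a ∈ P)
    (h : (n:ℝ) / 100 + d ≤ (cnt (fun b => b ∉ Q ∧ E a b) : ℝ)) : Inv E (P.erase a) Q d := by
  have hc := card_erase_of_mem ha
  have hc1 := hI.hcard
  have hd1 : ((d + 1 : ℕ) : ℝ) = d + 1 := by push_cast; ring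
  constructor
  · omega
  · intro x hx
    have := hI.hA1 x (mem_of_mem_erase hx)
    linarith
  · intro x hx
    by_cases hxa : x = a
    · rw [hxa]; exact h
    · have := hI.hA2 x (fun hP => hx (mem_erase.2 ⟨hxa, hP⟩))
      linarith
  · intro b hb
    have h1 := hI.hB1 b hb
    have h2 := cnt_or (p := fun x => x ∈ P ∧ E x b) (q := fun x => x ∈ P.erase a ∧ E x b)
      (r := fun x => x = a) (by intro x hx; rw [mem_erase]; tauto)
    have h3 := cnt_single a
    linarith
  · intro b hb
    have h1 := hI.hB2 b hb
    have h2 := cnt_monoR (p := fun x => x ∉ P ∧ E x b) (q := fun x => x ∉ P.erase a ∧ E x b)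
      (by intro x hx; rw [mem_erase]; tauto)
    linarith
  · have h1 := hI.hne
    have h2 := cnt_or (p := fun e : Fin n × Fin n => (e.1 ∈ P.erase a ↔ e.2 ∈ Q) ∧ ¬ E e.1 e.2)
      (q := fun e : Fin n × Fin n => (e.1 ∈ P ↔ e.2 ∈ Q) ∧ ¬ E e.1 e.2)
      (r := fun e : Fin n × Fin n => e.1 = a)
      (by intro e he; simp only [mem_erase] at he; tauto)
    have h3 := cnt_fst a
    rw [hd1, add_mul, one_mul] at h1
    linarith
  · have := hI.hP
    have := card_pos.2 ⟨a, ha⟩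
    omega
  · have := hI.hQ
    omega

theorem inv_insert {n : ℕ} {E : Fin n → Fin n → Prop} {P Q : Finset (Fin n)} {d : ℕ}
    (hI : Inv E P Q (d + 1)) (b : Fin n) (hb : b ∉ Q)
    (h : (n:ℝ) / 100 + d ≤ (cnt (fun a => a ∈ P ∧ E a b) : ℝ)) : Inv E P (insert b Q) d := by
  have hc := card_insert_of_notMem hb
  have hc1 := hI.hcard
  have hd1 : ((d + 1 : ℕ) : ℝ) = d + 1 := by push_cast; ring
  constructor
  · omega
  · intro x hx
    have h1 := hI.hA1 x hx
    have h2 := cnt_monoR (p := fun y => y ∈ Q ∧ E x y) (q := fun y => y ∈ insert b Q ∧ E x y)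
      (by intro x hx; rw [mem_insert]; tauto)
    linarith
  · intro x hx
    have h1 := hI.hA2 x hx
    have h2 := cnt_or (p := fun y => y ∉ Q ∧ E x y) (q := fun y => y ∉ insert b Q ∧ E x y)
      (r := fun y => y = b) (by intro x hx; rw [mem_insert]; tauto)
    have h3 := cnt_single b
    linarith
  · intro x hx
    by_cases hxa : x = b
    · rw [hxa]; exact h
    · have := hI.hB1 x ((mem_insert.1 hx).resolve_left hxa)
      linarith
  · intro x hx
    have := hI.hB2 x (fun hP => hx (mem_insert_of_mem hP))
    linarith
  · have h1 := hI.hne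
    have h2 := cnt_or (p := fun e : Fin n × Fin n => (e.1 ∈ P ↔ e.2 ∈ insert b Q) ∧ ¬ E e.1 e.2)
      (q := fun e : Fin n × Fin n => (e.1 ∈ P ↔ e.2 ∈ Q) ∧ ¬ E e.1 e.2)
      (r := fun e : Fin n × Fin n => e.2 = b)
      (by intro e he; simp only [mem_insert] at he; tauto)
    have h3 := cnt_snd b
    rw [hd1, add_mul, one_mul] at h1
    linarith
  · have := hI.hP
    omega
  · have := hI.hQ
    omega

theorem moving {n : ℕ} (E : Fin n → Fin n → Prop) (χ : Fin n → Fin n → ℕ) (hn : 10 ^ 10 ≤ n)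
    (hχ : ∀ col, (cnt (fun e : Fin n × Fin n => E e.1 e.2 ∧ χ e.1 e.2 = col) : ℝ)
      ≤ 1 / 10 ^ 19 * n)
    (hA : ∀ a, n ≤ 2 * cnt (fun b => E a b)) (hB : ∀ b, n ≤ 2 * cnt (fun a => E a b))
    (d : ℕ) : ∀ (P Q : Finset (Fin n)), Inv E P Q d →
    ∃ M : Equiv.Perm (Fin n), (∀ x, E x (M x)) ∧ ∀ x x', χ x (M x) = χ x' (M x') → x = x' := by
  have hnR : (10:ℝ) ^ 10 ≤ n := by exact_mod_cast hn
  have hn0 : (0:ℝ) < n := by linarith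
  induction d with
  | zero =>
    intro P Q hI
    refine finish E χ hn hχ P Q 0 hI ∅ (by simp) (by simp) ∅ (by simp) ?_ ?_
    · intro a
      rw [cnt_zero (by simp)]
      push_cast; positivity
    · intro a
      rw [cnt_zero (by simp)]
      push_cast; positivity
  | succ d ih =>
    intro P Q hI
    by_cases h1 : ∃ a ∈ P, (n:ℝ) / 100 + d ≤ (cnt (fun b => b ∉ Q ∧ E a b) : ℝ)
    · obtain ⟨a, ha, h⟩ := h1
      exact ih _ _ (inv_erase hI a ha h)
    by_cases h2 : ∃ b, b ∉ Q ∧ (n:ℝ) / 100 + d ≤ (cnt (fun a => a ∈ P ∧ E a b) : ℝ)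
    · obtain ⟨b, hb, h⟩ := h2
      exact ih _ _ (inv_insert hI b hb h)
    push Not at h1 h2
    have hdn : (d:ℝ) ≤ n / 10 ^ 6 := by
      have h := hI.hne
      have h1 : (d:ℝ) * n ≤ n / 10 ^ 6 * n := by
        have : (0:ℝ) ≤ (cnt (fun e : Fin n × Fin n => (e.1 ∈ P ↔ e.2 ∈ Q) ∧ ¬ E e.1 e.2) : ℝ) :=
          Nat.cast_nonneg _
        push_cast at h
        calc (d:ℝ) * n ≤ n ^ 2 / 10 ^ 6 := by linarith
          _ = _ := by ring
      exact le_of_mul_le_mul_right h1 hn0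
    refine pick E χ hn hχ hA hB P Q (d + 1) (by omega) hI ?_ ?_
    · intro a ha
      have := h1 a ha
      linarith
    · intro b hb
      have := h2 b hb
      linarith

end
end RB

namespace RB
section
open Classical Finset

theorem cnt_fst_prop {n : ℕ} (p : Fin n → Prop) :
    (cnt (fun e : Fin n × Fin n => p e.1) : ℝ) = n * cnt p := by
  rw [cnt_prod' (fun a _ => p a)]
  simp

theorem cnt_snd_prop {n : ℕ} (p : Fin n → Prop) :
    (cnt (fun e : Fin n × Fin n => p e.2) : ℝ) = n * cnt p := by
  rw [cnt_prod (fun _ b => p b)]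
  simp

/-- If every `a` satisfying `p` has at least `k` partners, then there are at least `k * cnt p`
pairs. -/
theorem cnt_prod_lower {n : ℕ} (p : Fin n → Prop) (R : Fin n → Fin n → Prop) (k : ℝ)
    (h : ∀ a, p a → k ≤ cnt (fun b => R a b)) :
    k * cnt p ≤ cnt (fun e : Fin n × Fin n => R e.1 e.2) := by
  rw [cnt_prod R]; push_cast
  calc k * cnt p = ∑ a ∈ univ.filter p, k := by
        rw [sum_const, nsmul_eq_mul, cnt_def, mul_comm]
    _ ≤ ∑ a ∈ univ.filter p, (cnt (fun b => R a b) : ℝ) := by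
        refine sum_le_sum (fun a ha => h a ?_)
        rw [mem_filter] at ha; exact ha.2
    _ ≤ _ := sum_le_sum_of_subset_of_nonneg (subset_univ _) (fun _ _ _ => Nat.cast_nonneg _)

theorem ext1 {n : ℕ} (E : Fin n → Fin n → Prop) (hn0 : (0:ℝ) < n)
    (hA : ∀ a, n ≤ 2 * cnt (fun b => E a b)) (X Y : Finset (Fin n)) (hX : n ≤ 2 * X.card)
    (hY : n ≤ 2 * Y.card) (η : ℝ)
    (he : (cnt (fun e : Fin n × Fin n => e.1 ∈ X ∧ e.2 ∈ Y ∧ E e.1 e.2) : ℝ) ≤ η * (n:ℝ) ^ 2) :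
    (cnt (fun e : Fin n × Fin n => e.1 ∈ X ∧ e.2 ∉ Y ∧ ¬ E e.1 e.2) : ℝ) ≤ η * (n:ℝ) ^ 2 ∧
    (Y.card : ℝ) ≤ n / 2 + 2 * η * n := by
  have hXR : (n:ℝ) ≤ 2 * X.card := by exact_mod_cast hX
  have hYR : (n:ℝ) ≤ 2 * Y.card := by exact_mod_cast hY
  have hAR : ∀ a, (n:ℝ) ≤ 2 * cnt (fun b => E a b) := fun a => by exact_mod_cast hA a
  have hs := fun a => cnt_split (fun b => E a b) (fun b => b ∈ Y)
  have hs2 : ∀ a, (n:ℝ) - Y.card = cnt (fun b => E a b ∧ b ∉ Y) + cnt (fun b => ¬ E a b ∧ b ∉ Y) := by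
    intro a
    rw [← cnt_notmem]
    exact cnt_split (fun b => b ∉ Y) (fun b => E a b)
  have hc : ∀ a, cnt (fun b => E a b ∧ b ∉ Y) = cnt (fun b => b ∉ Y ∧ E a b) :=
    fun a => cnt_congr (fun b => and_comm)
  constructor
  · refine le_trans ?_ he
    rw [cnt_prod (fun a b => a ∈ X ∧ b ∉ Y ∧ ¬ E a b), cnt_prod (fun a b => a ∈ X ∧ b ∈ Y ∧ E a b)]
    push_cast
    refine sum_le_sum (fun a _ => ?_)
    by_cases ha : a ∈ X
    · have h1 := hs a
      have h2 := hs2 a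
      rw [hc] at h2
      have h3 : cnt (fun b => ¬ E a b ∧ b ∉ Y) = cnt (fun b => b ∉ Y ∧ ¬ E a b) :=
        cnt_congr (fun b => and_comm)
      rw [h3] at h2
      have := hAR a
      simp only [ha, true_and]
      linarith
    · rw [cnt_zero (by intro b hb; exact ha hb.1)]
      push_cast; positivity
  · have h1 := cnt_prod_lower (fun a => a ∈ X) (fun a b => a ∈ X ∧ b ∈ Y ∧ E a b)
      ((Y.card : ℝ) - n / 2) (by
        intro a ha
        simp only [ha, true_and]
        have h1 := hs a
        have h2 := hs2 a
        rw [hc] at h2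
        have := hAR a
        have : (0:ℝ) ≤ cnt (fun b => ¬ E a b ∧ b ∉ Y) := Nat.cast_nonneg _
        linarith)
    rw [cnt_mem] at h1
    have h2 := h1.trans he
    have h3 : ((Y.card : ℝ) - n / 2) * (n / 2) ≤ ((Y.card : ℝ) - n / 2) * X.card :=
      mul_le_mul_of_nonneg_left (by linarith) (by linarith)
    have h4 : ((Y.card : ℝ) - n / 2) * (n / 2) ≤ (2 * η * n) * (n / 2) := by
      refine (h3.trans h2).trans (le_of_eq ?_); ring
    have := le_of_mul_le_mul_right h4 (by linarith)
    linarith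

theorem ext2 {n : ℕ} (E : Fin n → Fin n → Prop) (hn0 : (0:ℝ) < n)
    (hA : ∀ a, n ≤ 2 * cnt (fun b => E a b)) (X Y : Finset (Fin n))
    (hY : n ≤ 2 * Y.card) (η : ℝ) (hη : η ≤ 1 / 100)
    (hY2 : (Y.card : ℝ) ≤ n / 2 + 2 * η * n)
    (h1 : (cnt (fun e : Fin n × Fin n => e.1 ∈ X ∧ e.2 ∉ Y ∧ ¬ E e.1 e.2) : ℝ) ≤ η * (n:ℝ) ^ 2)
    (h2 : (cnt (fun e : Fin n × Fin n => e.1 ∉ X ∧ e.2 ∈ Y ∧ ¬ E e.1 e.2) : ℝ) ≤ η * (n:ℝ) ^ 2) :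
    ∃ P : Finset (Fin n), (∀ a ∈ P, (n:ℝ) / 4 ≤ cnt (fun b => b ∉ Y ∧ E a b)) ∧
      (∀ a ∉ P, (n:ℝ) / 4 ≤ cnt (fun b => b ∈ Y ∧ E a b)) ∧
      (cnt (fun a => a ∈ X ∧ a ∉ P) : ℝ) ≤ 5 * η * n ∧
      (cnt (fun a => a ∉ X ∧ a ∈ P) : ℝ) ≤ 5 * η * n := by
  have hYR : (n:ℝ) ≤ 2 * Y.card := by exact_mod_cast hY
  have hAR : ∀ a, (n:ℝ) ≤ 2 * cnt (fun b => E a b) := fun a => by exact_mod_cast hA a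
  have hs := fun a => cnt_split (fun b => E a b) (fun b => b ∈ Y)
  set P : Finset (Fin n) := univ.filter (fun a => (a ∈ X ∧ (n:ℝ) / 4 ≤ cnt (fun b => b ∉ Y ∧ E a b)) ∨
    (a ∉ X ∧ (cnt (fun b => b ∈ Y ∧ E a b) : ℝ) < n / 4)) with hP
  have mP : ∀ a, a ∈ P ↔ (a ∈ X ∧ (n:ℝ) / 4 ≤ cnt (fun b => b ∉ Y ∧ E a b)) ∨
    (a ∉ X ∧ (cnt (fun b => b ∈ Y ∧ E a b) : ℝ) < n / 4) := by
    intro a; rw [hP, mem_filter]; simp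
  refine ⟨P, ?_, ?_, ?_, ?_⟩
  · intro a ha
    rcases (mP a).1 ha with h | h
    · exact h.2
    · have := hs a
      have := hAR a
      linarith [h.2]
  · intro a ha
    rw [mP] at ha
    push Not at ha
    by_cases hX : a ∈ X
    · have := hs a
      have := hAR a
      have := ha.1 hX
      linarith
    · exact ha.2 hX
  · have h3 := cnt_prod_lower (fun a => a ∈ X ∧ a ∉ P) (fun a b => a ∈ X ∧ b ∉ Y ∧ ¬ E a b)
      ((n:ℝ) / 5) (by
        rintro a ⟨haX, haP⟩
        rw [mP] at haP
        push Not at haP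
        have q1 := haP.1 haX
        simp only [haX, true_and]
        have q2 : (n:ℝ) - Y.card = cnt (fun b => E a b ∧ b ∉ Y) + cnt (fun b => ¬ E a b ∧ b ∉ Y) := by
          rw [← cnt_notmem]
          exact cnt_split (fun b => b ∉ Y) (fun b => E a b)
        rw [cnt_congr (p := fun b => E a b ∧ b ∉ Y) (fun b => and_comm),
          cnt_congr (p := fun b => ¬ E a b ∧ b ∉ Y) (fun b => and_comm)] at q2
        nlinarith)
    have h4 := h3.trans h1
    have h5 : (n:ℝ) / 5 * (cnt (fun a => a ∈ X ∧ a ∉ P) : ℝ) ≤ (n:ℝ) / 5 * (5 * η * n) := by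
      refine h4.trans (le_of_eq ?_); ring
    exact le_of_mul_le_mul_left h5 (by linarith)
  · have h3 := cnt_prod_lower (fun a => a ∉ X ∧ a ∈ P) (fun a b => a ∉ X ∧ b ∈ Y ∧ ¬ E a b)
      ((n:ℝ) / 5) (by
        rintro a ⟨haX, haP⟩
        rw [mP] at haP
        have q1 : (cnt (fun b => b ∈ Y ∧ E a b) : ℝ) < n / 4 := by tauto
        simp only [haX, true_and, not_false_eq_true]
        have q2 : (Y.card : ℝ) = cnt (fun b => E a b ∧ b ∈ Y) + cnt (fun b => ¬ E a b ∧ b ∈ Y) := by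
          rw [← cnt_mem]
          exact cnt_split (fun b => b ∈ Y) (fun b => E a b)
        rw [cnt_congr (p := fun b => E a b ∧ b ∈ Y) (fun b => and_comm),
          cnt_congr (p := fun b => ¬ E a b ∧ b ∈ Y) (fun b => and_comm)] at q2
        linarith)
    have h4 := h3.trans h2
    have h5 : (n:ℝ) / 5 * (cnt (fun a => a ∉ X ∧ a ∈ P) : ℝ) ≤ (n:ℝ) / 5 * (5 * η * n) := by
      refine h4.trans (le_of_eq ?_); ring
    exact le_of_mul_le_mul_left h5 (by linarith)

theorem mkInv {n : ℕ} (E : Fin n → Fin n → Prop) (hn0 : (0:ℝ) < n) (P Q : Finset (Fin n))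
    (hle : Q.card ≤ P.card)
    (hA1 : ∀ a ∈ P, (n:ℝ) / 5 ≤ cnt (fun b => b ∈ Q ∧ E a b))
    (hA2 : ∀ a ∉ P, (n:ℝ) / 5 ≤ cnt (fun b => b ∉ Q ∧ E a b))
    (hB1 : ∀ b ∈ Q, (n:ℝ) / 5 ≤ cnt (fun a => a ∈ P ∧ E a b))
    (hB2 : ∀ b ∉ Q, (n:ℝ) / 5 ≤ cnt (fun a => a ∉ P ∧ E a b))
    (hne : (cnt (fun e : Fin n × Fin n => (e.1 ∈ P ↔ e.2 ∈ Q) ∧ ¬ E e.1 e.2) : ℝ)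
      ≤ 22 / 10 ^ 8 * (n:ℝ) ^ 2)
    (hP1 : (n:ℝ) / 2 - 7 / 10 ^ 8 * n ≤ P.card) (hP2 : (P.card : ℝ) ≤ n / 2 + 7 / 10 ^ 8 * n)
    (hQ1 : (n:ℝ) / 2 - 7 / 10 ^ 8 * n ≤ Q.card) (hQ2 : (Q.card : ℝ) ≤ n / 2 + 7 / 10 ^ 8 * n) :
    Inv E P Q (P.card - Q.card) := by
  have hd : ((P.card - Q.card : ℕ) : ℝ) ≤ 14 / 10 ^ 8 * n := by
    rw [Nat.cast_sub hle]; linarith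
  generalize hdd : P.card - Q.card = d at hd
  constructor
  · omega
  · intro a ha; have := hA1 a ha; linarith
  · intro a ha; have := hA2 a ha; linarith
  · intro a ha; have := hB1 a ha; linarith
  · intro a ha; have := hB2 a ha; linarith
  · have : (d:ℝ) * n ≤ 14 / 10 ^ 8 * n * n := mul_le_mul_of_nonneg_right hd hn0.le
    have h2 : (0:ℝ) ≤ (n:ℝ) ^ 2 := by positivity
    have h3 : 14 / 10 ^ 8 * (n:ℝ) * n = 14 / 10 ^ 8 * (n:ℝ) ^ 2 := by ring
    rw [h3] at this
    linarith
  · have : (n:ℝ) + 4 * d ≤ 4 * P.card := by linarith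
    exact_mod_cast this
  · have : 4 * (Q.card:ℝ) + 4 * d ≤ 3 * n := by linarith
    exact_mod_cast this

theorem extremal {n : ℕ} (E : Fin n → Fin n → Prop) (χ : Fin n → Fin n → ℕ) (hn : 10 ^ 10 ≤ n)
    (hχ : ∀ col, (cnt (fun e : Fin n × Fin n => E e.1 e.2 ∧ χ e.1 e.2 = col) : ℝ)
      ≤ 1 / 10 ^ 19 * n)
    (hA : ∀ a, n ≤ 2 * cnt (fun b => E a b)) (hB : ∀ b, n ≤ 2 * cnt (fun a => E a b))
    (X Y : Finset (Fin n)) (hX : n ≤ 2 * X.card) (hY : n ≤ 2 * Y.card)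
    (he : (cnt (fun e : Fin n × Fin n => e.1 ∈ X ∧ e.2 ∈ Y ∧ E e.1 e.2) : ℝ) ≤ 1 / 10 ^ 8 * (n:ℝ) ^ 2) :
    ∃ M : Equiv.Perm (Fin n), (∀ x, E x (M x)) ∧ ∀ x x', χ x (M x) = χ x' (M x') → x = x' := by
  have hnR : (10:ℝ) ^ 10 ≤ n := by exact_mod_cast hn
  have hn0 : (0:ℝ) < n := by linarith
  have hXR : (n:ℝ) ≤ 2 * X.card := by exact_mod_cast hX
  have hYR : (n:ℝ) ≤ 2 * Y.card := by exact_mod_cast hY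
  have he' : (cnt (fun e : Fin n × Fin n => e.1 ∈ Y ∧ e.2 ∈ X ∧ E e.2 e.1) : ℝ) ≤ 1 / 10 ^ 8 * (n:ℝ) ^ 2 := by
    rw [cnt_prod_swap (fun b a => b ∈ Y ∧ a ∈ X ∧ E a b),
      cnt_congr (q := fun e : Fin n × Fin n => e.1 ∈ X ∧ e.2 ∈ Y ∧ E e.1 e.2) (by intro e; tauto)]
    exact he
  obtain ⟨n1, hY2⟩ := ext1 E hn0 hA X Y hX hY _ he
  obtain ⟨n2, hX2⟩ := ext1 (fun b a => E a b) hn0 hB Y X hY hX _ he'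
  have n1' : (cnt (fun e : Fin n × Fin n => e.1 ∉ Y ∧ e.2 ∈ X ∧ ¬ E e.2 e.1) : ℝ) ≤ 1 / 10 ^ 8 * (n:ℝ) ^ 2 := by
    rw [cnt_prod_swap (fun b a => b ∉ Y ∧ a ∈ X ∧ ¬ E a b),
      cnt_congr (q := fun e : Fin n × Fin n => e.1 ∈ X ∧ e.2 ∉ Y ∧ ¬ E e.1 e.2) (by intro e; tauto)]
    exact n1
  have n2' : (cnt (fun e : Fin n × Fin n => e.1 ∉ X ∧ e.2 ∈ Y ∧ ¬ E e.1 e.2) : ℝ) ≤ 1 / 10 ^ 8 * (n:ℝ) ^ 2 := by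
    rw [cnt_prod_swap (fun a b => a ∉ X ∧ b ∈ Y ∧ ¬ E a b),
      cnt_congr (q := fun e : Fin n × Fin n => e.1 ∈ Y ∧ e.2 ∉ X ∧ ¬ E e.2 e.1) (by intro e; tauto)]
    exact n2
  obtain ⟨P, p1, p2, p3, p4⟩ := ext2 E hn0 hA X Y hY (1 / 10 ^ 8) (by norm_num) hY2 n1 n2'
  obtain ⟨Q', r1, r2, r3, r4⟩ := ext2 (fun b a => E a b) hn0 hB Y X hX (1 / 10 ^ 8) (by norm_num) hX2 n2 n1'
  set Q := Q'ᶜ with hQ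
  have mQ : ∀ b, b ∈ Q ↔ b ∉ Q' := fun b => mem_compl
  have s1 := cnt_split (fun a => a ∈ X) (fun a => a ∈ P)
  have s2 := cnt_split (fun a => a ∈ P) (fun a => a ∈ X)
  have s3 := cnt_split (fun a => a ∈ Y) (fun a => a ∈ Q')
  have s4 := cnt_split (fun a => a ∈ Q') (fun a => a ∈ Y)
  rw [cnt_congr (p := fun x => x ∈ P ∧ x ∈ X) (fun x => and_comm),
    cnt_congr (p := fun x => x ∉ P ∧ x ∈ X) (fun x => and_comm), cnt_mem] at s1
  rw [cnt_congr (p := fun x => x ∈ Q' ∧ x ∈ Y) (fun x => and_comm),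
    cnt_congr (p := fun x => x ∉ Q' ∧ x ∈ Y) (fun x => and_comm), cnt_mem] at s3
  rw [cnt_mem] at s2 s4
  have z1 : (0:ℝ) ≤ cnt (fun a => a ∈ X ∧ a ∉ P) := Nat.cast_nonneg _
  have z2 : (0:ℝ) ≤ cnt (fun a => a ∉ X ∧ a ∈ P) := Nat.cast_nonneg _
  have z3 : (0:ℝ) ≤ cnt (fun a => a ∈ Y ∧ a ∉ Q') := Nat.cast_nonneg _
  have z4 : (0:ℝ) ≤ cnt (fun a => a ∉ Y ∧ a ∈ Q') := Nat.cast_nonneg _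
  have hQc : (Q.card : ℝ) = n - Q'.card := by
    rw [← cnt_notmem, ← cnt_mem, cnt_congr mQ]
  have hP1 : (n:ℝ) / 2 - 7 / 10 ^ 8 * n ≤ P.card := by linarith
  have hP2 : (P.card : ℝ) ≤ n / 2 + 7 / 10 ^ 8 * n := by linarith
  have hQ1 : (n:ℝ) / 2 - 7 / 10 ^ 8 * n ≤ Q.card := by linarith
  have hQ2 : (Q.card : ℝ) ≤ n / 2 + 7 / 10 ^ 8 * n := by linarith
  have hA1 : ∀ a ∈ P, (n:ℝ) / 5 ≤ cnt (fun b => b ∈ Q ∧ E a b) := by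
    intro a ha
    have h1 := p1 a ha
    have h2 := cnt_or (p := fun b => b ∉ Y ∧ E a b) (q := fun b => b ∈ Q ∧ E a b)
      (r := fun b => b ∉ Y ∧ b ∈ Q') (by intro b hb; rw [mQ]; tauto)
    linarith
  have hA2 : ∀ a ∉ P, (n:ℝ) / 5 ≤ cnt (fun b => b ∉ Q ∧ E a b) := by
    intro a ha
    have h1 := p2 a ha
    have h2 := cnt_or (p := fun b => b ∈ Y ∧ E a b) (q := fun b => b ∉ Q ∧ E a b)
      (r := fun b => b ∈ Y ∧ b ∉ Q') (by intro b hb; rw [mQ]; tauto)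
    linarith
  have hB1 : ∀ b ∈ Q, (n:ℝ) / 5 ≤ cnt (fun a => a ∈ P ∧ E a b) := by
    intro b hb
    have h1 := r2 b ((mQ b).1 hb)
    have h2 := cnt_or (p := fun a => a ∈ X ∧ E a b) (q := fun a => a ∈ P ∧ E a b)
      (r := fun a => a ∈ X ∧ a ∉ P) (by intro b hb; tauto)
    linarith
  have hB2 : ∀ b ∉ Q, (n:ℝ) / 5 ≤ cnt (fun a => a ∉ P ∧ E a b) := by
    intro b hb
    have h1 := r1 b (by rw [mQ] at hb; tauto)
    have h2 := cnt_or (p := fun a => a ∉ X ∧ E a b) (q := fun a => a ∉ P ∧ E a b)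
      (r := fun a => a ∉ X ∧ a ∈ P) (by intro b hb; tauto)
    linarith
  have hne : (cnt (fun e : Fin n × Fin n => (e.1 ∈ P ↔ e.2 ∈ Q) ∧ ¬ E e.1 e.2) : ℝ)
      ≤ 22 / 10 ^ 8 * (n:ℝ) ^ 2 := by
    have h1 := cnt_or (p := fun e : Fin n × Fin n => (e.1 ∈ P ↔ e.2 ∈ Q) ∧ ¬ E e.1 e.2)
      (q := fun e : Fin n × Fin n => (e.1 ∈ X ∧ e.2 ∉ Y ∧ ¬ E e.1 e.2) ∨
        (e.1 ∉ X ∧ e.2 ∈ Y ∧ ¬ E e.1 e.2))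
      (r := fun e : Fin n × Fin n => ((e.1 ∈ X ∧ e.1 ∉ P) ∨ (e.1 ∉ X ∧ e.1 ∈ P)) ∨
        ((e.2 ∈ Y ∧ e.2 ∉ Q') ∨ (e.2 ∉ Y ∧ e.2 ∈ Q'))) (by
        intro e he
        rw [mQ] at he
        by_cases q1 : e.1 ∈ X <;> by_cases q2 : e.1 ∈ P <;> by_cases q3 : e.2 ∈ Y <;>
          by_cases q4 : e.2 ∈ Q' <;> simp [q1, q2, q3, q4] at he ⊢ <;> exact he)
    have h2 := cnt_or (p := fun e : Fin n × Fin n => (e.1 ∈ X ∧ e.2 ∉ Y ∧ ¬ E e.1 e.2) ∨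
        (e.1 ∉ X ∧ e.2 ∈ Y ∧ ¬ E e.1 e.2)) (fun e h => h)
    have h3 := cnt_or (p := fun e : Fin n × Fin n => ((e.1 ∈ X ∧ e.1 ∉ P) ∨ (e.1 ∉ X ∧ e.1 ∈ P)) ∨
        ((e.2 ∈ Y ∧ e.2 ∉ Q') ∨ (e.2 ∉ Y ∧ e.2 ∈ Q'))) (fun e h => h)
    rw [cnt_fst_prop (fun x => (x ∈ X ∧ x ∉ P) ∨ (x ∉ X ∧ x ∈ P)),
      cnt_snd_prop (fun y => (y ∈ Y ∧ y ∉ Q') ∨ (y ∉ Y ∧ y ∈ Q'))] at h3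
    have h4 := cnt_or (p := fun x => (x ∈ X ∧ x ∉ P) ∨ (x ∉ X ∧ x ∈ P)) (fun e h => h)
    have h5 := cnt_or (p := fun y => (y ∈ Y ∧ y ∉ Q') ∨ (y ∉ Y ∧ y ∈ Q')) (fun e h => h)
    have h6 : (n:ℝ) * cnt (fun x => (x ∈ X ∧ x ∉ P) ∨ (x ∉ X ∧ x ∈ P)) ≤ n * (10 / 10 ^ 8 * n) :=
      mul_le_mul_of_nonneg_left (by linarith) hn0.le
    have h7 : (n:ℝ) * cnt (fun y => (y ∈ Y ∧ y ∉ Q') ∨ (y ∉ Y ∧ y ∈ Q')) ≤ n * (10 / 10 ^ 8 * n) :=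
      mul_le_mul_of_nonneg_left (by linarith) hn0.le
    have h8 : (n:ℝ) * (10 / 10 ^ 8 * n) = 10 / 10 ^ 8 * (n:ℝ) ^ 2 := by ring
    rw [h8] at h6 h7
    linarith
  rcases le_total Q.card P.card with hle | hle
  · exact moving E χ hn hχ hA hB _ P Q (mkInv E hn0 P Q hle hA1 hA2 hB1 hB2 hne hP1 hP2 hQ1 hQ2)
  · have hPc' : (Pᶜ.card : ℝ) = n - P.card := by
      rw [← cnt_notmem, ← cnt_mem, cnt_congr (fun x => mem_compl)]
    have hQc' : (Qᶜ.card : ℝ) = n - Q.card := by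
      rw [← cnt_notmem, ← cnt_mem, cnt_congr (fun x => mem_compl)]
    have hle' : (Q.card : ℝ) ≥ P.card := by exact_mod_cast hle
    refine moving E χ hn hχ hA hB _ Pᶜ Qᶜ (mkInv E hn0 Pᶜ Qᶜ ?_ ?_ ?_ ?_ ?_ ?_
      (by linarith) (by linarith) (by linarith) (by linarith))
    · have : (Qᶜ.card : ℝ) ≤ Pᶜ.card := by linarith
      exact_mod_cast this
    · intro a ha
      simp only [mem_compl] at ha ⊢
      exact hA2 a ha
    · intro a ha
      simp only [mem_compl, not_not] at ha ⊢
      exact hA1 a ha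
    · intro a ha
      simp only [mem_compl] at ha ⊢
      exact hB2 a ha
    · intro a ha
      simp only [mem_compl, not_not] at ha ⊢
      exact hB1 a ha
    · simp only [mem_compl, not_iff_not]
      exact hne

theorem main_rel {n : ℕ} (E : Fin n → Fin n → Prop) (χ : Fin n → Fin n → ℕ) (hn : 10 ^ 10 ≤ n)
    (hχ : ∀ col, (cnt (fun e : Fin n × Fin n => E e.1 e.2 ∧ χ e.1 e.2 = col) : ℝ)
      ≤ 1 / 10 ^ 19 * n)
    (hA : ∀ a, n ≤ 2 * cnt (fun b => E a b)) (hB : ∀ b, n ≤ 2 * cnt (fun a => E a b)) :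
    ∃ M : Equiv.Perm (Fin n), (∀ x, E x (M x)) ∧ ∀ x x', χ x (M x) = χ x' (M x') → x = x' := by
  have hnR : (10:ℝ) ^ 10 ≤ n := by exact_mod_cast hn
  by_cases h : ∃ X Y : Finset (Fin n), n ≤ 2 * X.card ∧ n ≤ 2 * Y.card ∧
      (cnt (fun e : Fin n × Fin n => e.1 ∈ X ∧ e.2 ∈ Y ∧ E e.1 e.2) : ℝ) ≤ 1 / 10 ^ 8 * (n:ℝ) ^ 2
  · obtain ⟨X, Y, hX, hY, he⟩ := h
    exact extremal E χ hn hχ hA hB X Y hX hY he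
  · push Not at h
    refine nonextremal E χ (1 / 10 ^ 8) (1 / 10 ^ 19) (by norm_num) (by norm_num) (by norm_num)
      (by norm_num) (by linarith) ?_ ?_ ?_ ?_
    · simpa only [cnt_def] using hχ
    · simpa only [cnt_def] using hA
    · simpa only [cnt_def] using hB
    · intro X Y hX hY
      have := (h X Y hX hY).le
      simpa only [cnt_def] using this

end
end RB

/-- There exist μ > 0 and n₀ ∈ ℕ such that for every n ≥ n₀: if G is a
Dirac bipartite graph on 2n vertices (balanced bipartite with parts A, B of size n and
minimum degree at least n/2), then every μn-bounded edge colouring χ of G admits a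
perfect matching of G that is rainbow with respect to χ. -/
theorem rainbow_PM_in_Dirac_bipartite :
    ∃ μ : ℝ, 0 < μ ∧ ∃ n₀ : ℕ, ∀ n : ℕ, n₀ ≤ n →
      ∀ (V : Type) [Fintype V] (G : SimpleGraph V) (A B : Set V),
        A ∪ B = Set.univ → Disjoint A B → A.ncard = n → B.ncard = n →
        (∀ u v : V, G.Adj u v → (u ∈ A ∧ v ∈ B) ∨ (u ∈ B ∧ v ∈ A)) →
        (∀ v : V, (n : ℝ) / 2 ≤ ((G.neighborSet v).ncard : ℝ)) →
        ∀ χ : Sym2 V → ℕ,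
          (∀ c : ℕ, (({e : Sym2 V | e ∈ G.edgeSet ∧ χ e = c}).ncard : ℝ) ≤ μ * n) →
          ∃ M : G.Subgraph, M.IsPerfectMatching ∧
            ∀ e ∈ M.edgeSet, ∀ f ∈ M.edgeSet, χ e = χ f → e = f := by
  refine ⟨1 / 10 ^ 19, by norm_num, 10 ^ 10, ?_⟩
  intro n hn V _ G A B hAB hdisj hAn hBn hbip hdeg χ hχ
  have eA : Nonempty (Fin n ≃ A) := by
    have h : Nat.card A = n := by rw [Nat.card_coe_set_eq]; exact hAn
    exact ⟨((Finite.equivFinOfCardEq h)).symm⟩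
  have eB : Nonempty (Fin n ≃ B) := by
    have h : Nat.card B = n := by rw [Nat.card_coe_set_eq]; exact hBn
    exact ⟨((Finite.equivFinOfCardEq h)).symm⟩
  obtain ⟨fA⟩ := eA
  obtain ⟨fB⟩ := eB
  have hnot : ∀ v, v ∈ A → v ∉ B := fun v h1 h2 => Set.disjoint_left.1 hdisj h1 h2
  have hne : ∀ a b, (fA a : V) ≠ fB b := fun a b h => hnot _ (fA a).2 (h ▸ (fB b).2)
  have iA : ∀ a a', (fA a : V) = fA a' → a = a' := fun a a' h => fA.injective (Subtype.ext h)
  have iB : ∀ a a', (fB a : V) = fB a' → a = a' := fun a a' h => fB.injective (Subtype.ext h)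
  have sA : ∀ v ∈ A, ∃ a, (fA a : V) = v := fun v hv => ⟨fA.symm ⟨v, hv⟩, by simp⟩
  have sB : ∀ v ∈ B, ∃ a, (fB a : V) = v := fun v hv => ⟨fB.symm ⟨v, hv⟩, by simp⟩
  have cnc : ∀ {α : Type} [Fintype α] (p : α → Prop), RB.cnt p = {x | p x}.ncard := by
    intro α _ p
    classical
    rw [← RB.cnt_def, Set.ncard_eq_toFinset_card' {x | p x}]
    congr 1
    ext x; simp
  obtain ⟨M, hM1, hM2⟩ := RB.main_rel (n := n) (fun a b => G.Adj (fA a) (fB b))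
    (fun a b => χ s((fA a : V), (fB b : V))) hn (by
      intro col
      refine le_trans (Nat.cast_le.2 ?_) (hχ col)
      rw [cnc]
      refine Set.ncard_le_ncard_of_injOn (fun e => s((fA e.1 : V), (fB e.2 : V))) ?_ ?_ (Set.toFinite _)
      · rintro ⟨a, b⟩ h
        exact h
      · rintro ⟨a, b⟩ _ ⟨a', b'⟩ _ h
        simp only [Sym2.eq_iff] at h
        rcases h with h | h
        · exact Prod.ext (iA _ _ h.1) (iB _ _ h.2)
        · exact absurd h.1 (hne _ _)) (by
      intro a
      have h := hdeg (fA a)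
      have h2 : (G.neighborSet (fA a)).ncard ≤ RB.cnt (fun b => G.Adj (fA a) (fB b)) := by
        rw [cnc]
        have : G.neighborSet (fA a) ⊆ (fun b => (fB b : V)) '' {b | G.Adj (fA a) (fB b)} := by
          intro v hv
          have hv' : G.Adj (fA a) v := hv
          rcases hbip _ _ hv' with q | q
          · obtain ⟨b, rfl⟩ := sB v q.2
            exact ⟨b, hv', rfl⟩
          · exact absurd q.1 (hnot _ (fA a).2)
        exact (Set.ncard_le_ncard this (Set.toFinite _)).trans (Set.ncard_image_le (Set.toFinite _))
      have h3 : ((G.neighborSet (fA a)).ncard : ℝ) ≤ RB.cnt (fun b => G.Adj (fA a) (fB b)) := by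
        exact_mod_cast h2
      have : (n:ℝ) ≤ 2 * RB.cnt (fun b => G.Adj (fA a) (fB b)) := by linarith
      exact_mod_cast this) (by
      intro b
      have h := hdeg (fB b)
      have h2 : (G.neighborSet (fB b)).ncard ≤ RB.cnt (fun a => G.Adj (fA a) (fB b)) := by
        rw [cnc]
        have : G.neighborSet (fB b) ⊆ (fun a => (fA a : V)) '' {a | G.Adj (fA a) (fB b)} := by
          intro v hv
          have hv' : G.Adj (fB b) v := hv
          rcases hbip _ _ hv' with q | q
          · exact absurd (fB b).2 (hnot _ q.1)
          · obtain ⟨a, rfl⟩ := sA v q.2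
            exact ⟨a, hv'.symm, rfl⟩
        exact (Set.ncard_le_ncard this (Set.toFinite _)).trans (Set.ncard_image_le (Set.toFinite _))
      have h3 : ((G.neighborSet (fB b)).ncard : ℝ) ≤ RB.cnt (fun a => G.Adj (fA a) (fB b)) := by
        exact_mod_cast h2
      have : (n:ℝ) ≤ 2 * RB.cnt (fun a => G.Adj (fA a) (fB b)) := by linarith
      exact_mod_cast this)
  let S : G.Subgraph :=
    { verts := Set.univ
      Adj := fun u v => ∃ a, (u = fA a ∧ v = fB (M a)) ∨ (v = fA a ∧ u = fB (M a))
      adj_sub := by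
        rintro u v ⟨a, ⟨rfl, rfl⟩ | ⟨rfl, rfl⟩⟩
        · exact hM1 a
        · exact (hM1 a).symm
      edge_vert := fun _ => Set.mem_univ _
      symm := ⟨by
        rintro u v ⟨a, h⟩
        exact ⟨a, h.symm⟩⟩ }
  have hedge : ∀ e ∈ S.edgeSet, ∃ a, e = s((fA a : V), (fB (M a) : V)) := by
    intro e
    induction e using Sym2.ind with
    | _ u v =>
      intro h
      rw [SimpleGraph.Subgraph.mem_edgeSet] at h
      obtain ⟨a, ⟨rfl, rfl⟩ | ⟨rfl, rfl⟩⟩ := h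
      · exact ⟨a, rfl⟩
      · exact ⟨a, Sym2.eq_swap⟩
  refine ⟨S, ⟨?_, fun v => Set.mem_univ v⟩, ?_⟩
  · intro v _
    have hv : v ∈ A ∪ B := by rw [hAB]; trivial
    rcases hv with hv | hv
    · obtain ⟨a, rfl⟩ := sA v hv
      refine ⟨fB (M a), ⟨a, Or.inl ⟨rfl, rfl⟩⟩, ?_⟩
      rintro w ⟨a', ⟨h1, h2⟩ | ⟨h1, h2⟩⟩
      · rw [h2, iA _ _ h1]
      · exact absurd h2 (hne _ _)
    · obtain ⟨b, rfl⟩ := sB v hv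
      refine ⟨fA (M.symm b), ⟨M.symm b, Or.inr ⟨rfl, by simp⟩⟩, ?_⟩
      rintro w ⟨a', ⟨h1, h2⟩ | ⟨h1, h2⟩⟩
      · exact absurd h1.symm (hne _ _)
      · rw [h1, iB _ _ h2]; simp
  · intro e he f hf h
    obtain ⟨a, rfl⟩ := hedge e he
    obtain ⟨a', rfl⟩ := hedge f hf
    rw [hM2 a a' h]
end

section
/- For every ε > 0 there exist μ > 0 and n₀ ∈ ℕ such that for every n ≥ n₀ the following holds: if G is a balanced bipartite graph on 2n vertices with minimum degree δ(G) ≥ (1/2 + ε)n, then for every μn-bounded system of conflicts F for E(G) there exists a perfect matching of G that is F-conflict-free. -/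
open Finset

open Classical in
theorem lll_aux {W E : Type*} (Ω : Finset W) (Ev : E → W → Prop) (F0 : Finset E)
    (Γ : E → E → Prop) (p d : ℝ) (hp : 0 ≤ p) (hpd : 4 * p * d ≤ 1)
    (hd : ∀ i ∈ F0, ((F0.filter (Γ i)).card : ℝ) ≤ d)
    (h : ∀ i ∈ F0, ∀ S ⊆ F0, (∀ j ∈ S, ¬ Γ i j) →
      (((Ω.filter (fun w => ∀ j ∈ S, ¬ Ev j w)).filter (Ev i)).card : ℝ) ≤
        p * ((Ω.filter (fun w => ∀ j ∈ S, ¬ Ev j w)).card : ℝ)) :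
    ∀ k : ℕ, ∀ S ⊆ F0, S.card = k → ∀ i ∈ F0,
      (((Ω.filter (fun w => ∀ j ∈ S, ¬ Ev j w)).filter (Ev i)).card : ℝ) ≤
        2 * p * ((Ω.filter (fun w => ∀ j ∈ S, ¬ Ev j w)).card : ℝ) := by
  intro k
  induction k using Nat.strong_induction_on with
  | _ k ih =>
  intro S hS hk i hi
  by_cases hne : (S.filter (Γ i)).Nonempty
  · set S2 := S.filter (fun j => ¬ Γ i j) with hS2
    have hS2S : S2 ⊆ S := filter_subset _ _
    have hlt : S2.card < k := by
      have := card_filter_add_card_filter_not (s := S) (Γ i)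
      rw [← hS2] at this
      have := hne.card_pos
      omega
    have h1 := h i hi S2 (hS2S.trans hS) (fun j hj => (mem_filter.1 hj).2)
    have h2 : (((Ω.filter (fun w => ∀ j ∈ S, ¬ Ev j w)).filter (Ev i)).card : ℝ) ≤
      (((Ω.filter (fun w => ∀ j ∈ S2, ¬ Ev j w)).filter (Ev i)).card : ℝ) := by
      norm_cast
      apply card_le_card
      intro w hw
      simp only [mem_filter] at hw ⊢
      exact ⟨⟨hw.1.1, fun j hj => hw.1.2 j (hS2S hj)⟩, hw.2⟩
    have h3 : (Ω.filter (fun w => ∀ j ∈ S2, ¬ Ev j w)) ⊆ (Ω.filter (fun w => ∀ j ∈ S, ¬ Ev j w)) ∪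
        (S.filter (Γ i)).biUnion (fun j => (Ω.filter (fun w => ∀ j ∈ S2, ¬ Ev j w)).filter (Ev j)) := by
      intro w hw
      by_cases hw2 : ∀ j ∈ S, ¬ Ev j w
      · exact mem_union_left _ (mem_filter.2 ⟨(mem_filter.1 hw).1, hw2⟩)
      · push Not at hw2
        obtain ⟨j, hj, hjw⟩ := hw2
        apply mem_union_right
        refine mem_biUnion.2 ⟨j, mem_filter.2 ⟨hj, ?_⟩, mem_filter.2 ⟨hw, hjw⟩⟩
        by_contra hg
        exact (mem_filter.1 hw).2 j (mem_filter.2 ⟨hj, hg⟩) hjw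
    have h4 := (card_le_card h3).trans ((card_union_le _ _).trans (Nat.add_le_add_left card_biUnion_le _))
    have h4' : ((Ω.filter (fun w => ∀ j ∈ S2, ¬ Ev j w)).card : ℝ) ≤
        ((Ω.filter (fun w => ∀ j ∈ S, ¬ Ev j w)).card : ℝ) + ∑ j ∈ S.filter (Γ i),
        (((Ω.filter (fun w => ∀ j ∈ S2, ¬ Ev j w)).filter (Ev j)).card : ℝ) := by
      exact_mod_cast h4
    have h5 : ∑ j ∈ S.filter (Γ i),
        (((Ω.filter (fun w => ∀ j ∈ S2, ¬ Ev j w)).filter (Ev j)).card : ℝ) ≤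
        (S.filter (Γ i)).card • (2 * p * ((Ω.filter (fun w => ∀ j ∈ S2, ¬ Ev j w)).card : ℝ)) := by
      apply sum_le_card_nsmul
      intro j hj
      exact ih _ hlt S2 (hS2S.trans hS) rfl j (hS (mem_filter.1 hj).1)
    rw [nsmul_eq_mul] at h5
    have h6 : ((S.filter (Γ i)).card : ℝ) ≤ d := by
      refine le_trans ?_ (hd i hi)
      exact_mod_cast card_le_card (filter_subset_filter _ hS)
    set N2 := ((Ω.filter (fun w => ∀ j ∈ S2, ¬ Ev j w)).card : ℝ)
    have hN2 : 0 ≤ N2 := Nat.cast_nonneg _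
    have h7 : ((S.filter (Γ i)).card : ℝ) * (2 * p * N2) ≤ d * (2 * p * N2) :=
      mul_le_mul_of_nonneg_right h6 (by positivity)
    have h8 : d * (2 * p * N2) ≤ N2 / 2 := by nlinarith
    have h9 : N2 ≤ 2 * ((Ω.filter (fun w => ∀ j ∈ S, ¬ Ev j w)).card : ℝ) := by linarith
    nlinarith
  · have := h i hi S hS (by
      intro j hj hg
      exact hne ⟨j, mem_filter.2 ⟨hj, hg⟩⟩)
    refine this.trans ?_
    have : (0:ℝ) ≤ ((Ω.filter (fun w => ∀ j ∈ S, ¬ Ev j w)).card : ℝ) := Nat.cast_nonneg _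
    nlinarith

open Classical in
theorem lll {W E : Type*} (Ω : Finset W) (Ev : E → W → Prop) (F0 : Finset E)
    (Γ : E → E → Prop) (p d : ℝ) (hp : 0 ≤ p) (hp2 : 2 * p < 1) (hpd : 4 * p * d ≤ 1)
    (hΩ : Ω.Nonempty)
    (hd : ∀ i ∈ F0, ((F0.filter (Γ i)).card : ℝ) ≤ d)
    (h : ∀ i ∈ F0, ∀ S ⊆ F0, (∀ j ∈ S, ¬ Γ i j) →
      (((Ω.filter (fun w => ∀ j ∈ S, ¬ Ev j w)).filter (Ev i)).card : ℝ) ≤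
        p * ((Ω.filter (fun w => ∀ j ∈ S, ¬ Ev j w)).card : ℝ)) :
    ∃ w ∈ Ω, ∀ j ∈ F0, ¬ Ev j w := by
  have key := lll_aux Ω Ev F0 Γ p d hp hpd hd h
  have main : ∀ S : Finset E, S ⊆ F0 → (Ω.filter (fun w => ∀ j ∈ S, ¬ Ev j w)).Nonempty := by
    intro S
    induction S using Finset.induction_on with
    | empty => intro _; simpa using hΩ
    | insert i S hi ih =>
      intro hS
      have hS' : S ⊆ F0 := (subset_insert _ _).trans hS
      have h1 := ih hS'
      have h2 := key _ S hS' rfl i (hS (mem_insert_self _ _))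
      have h3 : (0:ℝ) < ((Ω.filter (fun w => ∀ j ∈ S, ¬ Ev j w)).card : ℝ) := by
        exact_mod_cast h1.card_pos
      have h4 : ((Ω.filter (fun w => ∀ j ∈ S, ¬ Ev j w)).filter (Ev i)).card <
        (Ω.filter (fun w => ∀ j ∈ S, ¬ Ev j w)).card := by
        have : (((Ω.filter (fun w => ∀ j ∈ S, ¬ Ev j w)).filter (Ev i)).card : ℝ) <
          ((Ω.filter (fun w => ∀ j ∈ S, ¬ Ev j w)).card : ℝ) := by nlinarith
        exact_mod_cast this
      obtain ⟨w, hw, hw2⟩ := exists_mem_notMem_of_card_lt_card h4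
      refine ⟨w, ?_⟩
      simp only [mem_filter, mem_insert, forall_eq_or_imp] at hw hw2 ⊢
      tauto
  obtain ⟨w, hw⟩ := main F0 subset_rfl
  exact ⟨w, (mem_filter.1 hw).1, (mem_filter.1 hw).2⟩

open Classical in
theorem hall_aux {n : ℕ} (R : Fin n → Fin n → Prop)
    (hr : ∀ a, n < 2 * (univ.filter (fun b => R a b)).card)
    (hc : ∀ b, n < 2 * (univ.filter (fun a => R a b)).card) :
    ∃ σ : Equiv.Perm (Fin n), ∀ i, R i (σ i) := by
  obtain ⟨f, hf, hf2⟩ := (all_card_le_biUnion_card_iff_exists_injective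
    (fun a => univ.filter (fun b => R a b))).1 (by
      intro S
      by_cases hS : n < 2 * S.card
      · have : S.biUnion (fun a => univ.filter (fun b => R a b)) = univ := by
          ext b
          simp only [mem_biUnion, mem_filter, mem_univ, true_and, iff_true]
          by_contra hcon
          push Not at hcon
          have hd : Disjoint S (univ.filter (fun a => R a b)) := by
            rw [Finset.disjoint_left]
            intro a ha hb
            exact hcon a ha (mem_filter.1 hb).2
          have h1 := card_union_of_disjoint hd
          have h2 := card_le_univ (S ∪ (univ.filter (fun a => R a b)))
          rw [Fintype.card_fin] at h2
          have := hc b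
          omega
        rw [this]
        exact card_le_univ _
      · rcases S.eq_empty_or_nonempty with rfl | ⟨a, ha⟩
        · simp
        · have h1 := card_le_card (subset_biUnion_of_mem (fun a => univ.filter (fun b => R a b)) ha)
          have := hr a
          omega)
  refine ⟨Equiv.ofBijective f (Finite.injective_iff_bijective.1 hf), fun i => ?_⟩
  simpa using hf2 i

open Classical in
theorem good_count {n : ℕ} (ε μ : ℝ) (hε : 0 < ε) (hn : 3 ≤ ε * n) (hμ : μ ≤ ε / 4)
    (R : Fin n → Fin n → Prop)
    (hr : ∀ a, (1 / 2 + ε) * n ≤ ((univ.filter (fun b => R a b)).card : ℝ))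
    (hc : ∀ b, (1 / 2 + ε) * n ≤ ((univ.filter (fun a => R a b)).card : ℝ))
    (C : Fin n × Fin n → Fin n × Fin n → Prop)
    (hC : ∀ g, ((univ.filter (fun h => C g h)).card : ℝ) ≤ μ * n)
    (a b : Fin n) (P : Finset (Fin n)) (hP : P.card ≤ 1) (σ : Equiv.Perm (Fin n)) :
    ε / 4 * n ^ 2 ≤ ((univ.filter (fun x : Fin n × Fin n =>
      (x.1 ≠ a ∧ x.1 ∉ P ∧ R a (σ x.1) ∧ x.2 ≠ a ∧ x.2 ≠ x.1 ∧ x.2 ∉ P ∧ R x.1 (σ x.2) ∧ R x.2 b)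
      ∧ ∀ y, ¬ C (y, σ y) (x.1, σ x.2))).card : ℝ) := by
  set T := univ.filter (fun x : Fin n × Fin n =>
      (x.1 ≠ a ∧ x.1 ∉ P ∧ R a (σ x.1) ∧ x.2 ≠ a ∧ x.2 ≠ x.1 ∧ x.2 ∉ P ∧ R x.1 (σ x.2) ∧ R x.2 b))
    with hT
  set Gd := (univ.filter (fun x : Fin n × Fin n =>
      (x.1 ≠ a ∧ x.1 ∉ P ∧ R a (σ x.1) ∧ x.2 ≠ a ∧ x.2 ≠ x.1 ∧ x.2 ∉ P ∧ R x.1 (σ x.2) ∧ R x.2 b)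
      ∧ ∀ y, ¬ C (y, σ y) (x.1, σ x.2))) with hGd
  have hrow : ∀ a, (1 / 2 + ε) * n ≤ ((univ.filter (fun x => R a (σ x))).card : ℝ) := by
    intro a
    refine (hr a).trans ?_
    norm_cast
    apply card_le_card_of_injOn (fun x => σ.symm x)
    · intro x hx; simpa using hx
    · exact σ.symm.injective.injOn
  have hbad : ((univ.biUnion (fun y => univ.filter (fun x : Fin n × Fin n => C (y, σ y) (x.1, σ x.2)))).card : ℝ)
      ≤ n * (μ * n) := by
    have h1 : ((univ.biUnion (fun y => univ.filter (fun x : Fin n × Fin n => C (y, σ y) (x.1, σ x.2)))).card : ℝ)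
      ≤ ∑ y : Fin n, ((univ.filter (fun x : Fin n × Fin n => C (y, σ y) (x.1, σ x.2))).card : ℝ) := by
      exact_mod_cast card_biUnion_le
    refine h1.trans ?_
    refine (sum_le_card_nsmul univ _ (μ * n) ?_).trans ?_
    · intro y _
      refine le_trans ?_ (hC (y, σ y))
      norm_cast
      apply card_le_card_of_injOn (fun x => (x.1, σ x.2))
      · intro x hx; simpa using hx
      · rintro ⟨x1, x2⟩ _ ⟨y1, y2⟩ _ h
        simpa using h
    · simp
  have hTle : (T.card : ℝ) ≤ Gd.card + n * (μ * n) := by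
    have : T ⊆ Gd ∪ univ.biUnion (fun y => univ.filter (fun x : Fin n × Fin n => C (y, σ y) (x.1, σ x.2))) := by
      intro x hx
      simp only [hT, hGd, mem_union, mem_biUnion, mem_filter, mem_univ, true_and] at hx ⊢
      by_cases h : ∃ y, C (y, σ y) (x.1, σ x.2)
      · exact Or.inr h
      · push Not at h
        exact Or.inl ⟨hx, h⟩
    have h2 := (card_le_card this).trans (card_union_le _ _)
    have h2' : (T.card : ℝ) ≤ Gd.card + ((univ.biUnion (fun y => univ.filter (fun x : Fin n × Fin n => C (y, σ y) (x.1, σ x.2)))).card : ℝ) := by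
      exact_mod_cast h2
    linarith
  set T1 := (univ.filter (fun x => R a (σ x))) \ insert a P with hT1
  have hT1c : (n : ℝ) / 2 ≤ T1.card := by
    have h1 := le_card_sdiff (insert a P) (univ.filter (fun x => R a (σ x)))
    rw [← hT1] at h1
    have h2 := card_insert_le a P
    have h3 : (univ.filter (fun x => R a (σ x))).card ≤ T1.card + 2 := by omega
    have h4 : ((univ.filter (fun x => R a (σ x))).card : ℝ) ≤ T1.card + 2 := by exact_mod_cast h3
    have := hrow a
    linarith
  let T2 : Fin n → Finset (Fin n) := fun x =>
    ((univ.filter (fun y => R y b)) ∩ (univ.filter (fun y => R x (σ y)))) \ insert x (insert a P)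
  have hT2c : ∀ x, ε * n ≤ ((T2 x).card : ℝ) := by
    intro x
    have h1 := le_card_sdiff (insert x (insert a P)) ((univ.filter (fun y => R y b)) ∩ (univ.filter (fun y => R x (σ y))))
    have h2 := card_insert_le a P
    have h2' := card_insert_le x (insert a P)
    have h3 := card_union_add_card_inter (univ.filter (fun y => R y b)) (univ.filter (fun y => R x (σ y)))
    have h4 := card_le_univ ((univ.filter (fun y => R y b)) ∪ (univ.filter (fun y => R x (σ y))))
    rw [Fintype.card_fin] at h4
    have h5 : (univ.filter (fun y => R y b)).card + (univ.filter (fun y => R x (σ y))).card ≤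
      (T2 x).card + 3 + n := by
      simp only [T2]
      omega
    have h6 : ((univ.filter (fun y => R y b)).card : ℝ) + (univ.filter (fun y => R x (σ y))).card ≤
      (T2 x).card + 3 + n := by exact_mod_cast h5
    have := hrow x
    have := hc b
    linarith
  have hTge : (n : ℝ) / 2 * (ε * n) ≤ T.card := by
    have h1 : (T1.sigma T2).card ≤ T.card := by
      apply card_le_card_of_injOn (fun x => (x.1, x.2))
      · rintro ⟨x, y⟩ hx
        simp only [hT1, T2, hT, coe_sigma, Set.mem_sigma_iff, mem_coe, mem_sdiff, mem_filter, mem_inter,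
          mem_univ, true_and, mem_insert, not_or] at hx ⊢
        tauto
      · rintro ⟨x, y⟩ _ ⟨x', y'⟩ _ h
        simp only [Prod.mk.injEq] at h
        obtain ⟨rfl, rfl⟩ := h
        rfl
    rw [card_sigma] at h1
    have h2 : (∑ x ∈ T1, ((T2 x).card : ℝ)) ≤ T.card := by exact_mod_cast h1
    have h3 := card_nsmul_le_sum T1 (fun x => ((T2 x).card : ℝ)) (ε * n) (fun x _ => hT2c x)
    rw [nsmul_eq_mul] at h3
    have h4 : (n : ℝ) / 2 * (ε * n) ≤ T1.card * (ε * n) :=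
      mul_le_mul_of_nonneg_right hT1c (by linarith)
    linarith
  have : μ * (n:ℝ)^2 ≤ ε / 4 * (n:ℝ)^2 := mul_le_mul_of_nonneg_right hμ (by positivity)
  nlinarith

/-- The event indexed by `i` : both edges lie in the matching. -/
def PMEv {n : ℕ} (i : (Fin n × Fin n) × (Fin n × Fin n)) (σ : Equiv.Perm (Fin n)) : Prop :=
  σ i.1.1 = i.1.2 ∧ σ i.2.1 = i.2.2

open Classical in
theorem switch {n : ℕ} (ε μ : ℝ) (hε : 0 < ε) (hn : 3 ≤ ε * n) (hμ : μ ≤ ε / 4)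
    (R : Fin n → Fin n → Prop)
    (hr : ∀ a, (1 / 2 + ε) * n ≤ ((univ.filter (fun b => R a b)).card : ℝ))
    (hc : ∀ b, (1 / 2 + ε) * n ≤ ((univ.filter (fun a => R a b)).card : ℝ))
    (C : Fin n × Fin n → Fin n × Fin n → Prop) (hsymm : ∀ g h, C g h → C h g)
    (hC : ∀ g, ((univ.filter (fun h => C g h)).card : ℝ) ≤ μ * n)
    (a b : Fin n) (P : Finset (Fin n)) (hP : P.card ≤ 1) (haP : a ∉ P) (τ : Fin n → Fin n)
    (S : Finset ((Fin n × Fin n) × (Fin n × Fin n)))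
    (hS : ∀ i ∈ S, C i.1 i.2 ∧ i.1.1 ≠ i.2.1)
    (hSab : ∀ i ∈ S, i.1.1 ≠ a ∧ i.1.2 ≠ b ∧ i.2.1 ≠ a ∧ i.2.2 ≠ b)
    (X : Finset (Equiv.Perm (Fin n)))
    (hX : ∀ σ, σ ∈ X ↔ (∀ i, R i (σ i)) ∧ (∀ j ∈ S, ¬ PMEv j σ) ∧ ∀ p ∈ P, σ p = τ p) :
    ε / 4 * n * ((X.filter (fun σ => σ a = b)).card : ℝ) ≤ X.card := by
  have hn0 : (0:ℝ) < n := by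
    by_contra h
    have : (n:ℝ) = 0 := le_antisymm (not_lt.1 h) (Nat.cast_nonneg _)
    rw [this] at hn
    norm_num at hn
  let Gd : Equiv.Perm (Fin n) → Finset (Fin n × Fin n) := fun σ =>
    (univ.filter (fun x : Fin n × Fin n =>
      (x.1 ≠ a ∧ x.1 ∉ P ∧ R a (σ x.1) ∧ x.2 ≠ a ∧ x.2 ≠ x.1 ∧ x.2 ∉ P ∧ R x.1 (σ x.2) ∧ R x.2 b)
      ∧ ∀ y, ¬ C (y, σ y) (x.1, σ x.2)))
  have hGd : ∀ σ, ε / 4 * n ^ 2 ≤ ((Gd σ).card : ℝ) := fun σ =>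
    good_count ε μ hε hn hμ R hr hc C hC a b P hP σ
  let c : Fin n × Fin n → Equiv.Perm (Fin n) := fun x => Equiv.swap a x.1 * Equiv.swap x.1 x.2
  have hca : ∀ x : Fin n × Fin n, x.1 ≠ a → x.2 ≠ a → x.2 ≠ x.1 → c x a = x.1 := by
    intro x h1 h2 h3
    simp only [c, Equiv.Perm.mul_apply]
    rw [Equiv.swap_apply_of_ne_of_ne h1.symm h2.symm, Equiv.swap_apply_left]
  have hc1 : ∀ x : Fin n × Fin n, x.1 ≠ a → x.2 ≠ a → x.2 ≠ x.1 → c x x.1 = x.2 := by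
    intro x h1 h2 h3
    simp only [c, Equiv.Perm.mul_apply]
    rw [Equiv.swap_apply_left, Equiv.swap_apply_of_ne_of_ne h2 h3]
  have hc2 : ∀ x : Fin n × Fin n, c x x.2 = a := by
    intro x
    simp only [c, Equiv.Perm.mul_apply]
    rw [Equiv.swap_apply_right, Equiv.swap_apply_right]
  have hc3 : ∀ (x : Fin n × Fin n) y, y ≠ a → y ≠ x.1 → y ≠ x.2 → c x y = y := by
    intro x y h1 h2 h3
    simp only [c, Equiv.Perm.mul_apply]
    rw [Equiv.swap_apply_of_ne_of_ne h2 h3, Equiv.swap_apply_of_ne_of_ne h1 h2]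
  have hcard : ((X.filter (fun σ => σ a = b)).sigma Gd).card ≤ (X ×ˢ (univ : Finset (Fin n))).card := by
    apply card_le_card_of_injOn (fun y => (y.1 * c y.2, y.2.1))
    · rintro ⟨σ, x⟩ hx
      simp only [Gd, coe_sigma, Set.mem_sigma_iff, mem_coe, mem_filter, mem_univ, true_and, hX] at hx
      obtain ⟨⟨⟨hR, hSσ, hPσ⟩, hab⟩, ⟨h1, h1P, hRa, h2, h21, h2P, hR1, hR2⟩, hCx⟩ := hx
      simp only [mem_coe, mem_product, mem_univ, and_true, hX]
      have hva : (σ * c x) a = σ x.1 := by rw [Equiv.Perm.mul_apply, hca x h1 h2 h21]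
      have hv1 : (σ * c x) x.1 = σ x.2 := by rw [Equiv.Perm.mul_apply, hc1 x h1 h2 h21]
      have hv2 : (σ * c x) x.2 = b := by rw [Equiv.Perm.mul_apply, hc2 x, hab]
      have hv3 : ∀ y, y ≠ a → y ≠ x.1 → y ≠ x.2 → (σ * c x) y = σ y := by
        intro y q1 q2 q3
        rw [Equiv.Perm.mul_apply, hc3 x y q1 q2 q3]
      refine ⟨?_, ?_, ?_⟩
      · intro i
        by_cases e0 : i = a
        · rw [e0, hva]; exact hRa
        by_cases e1 : i = x.1
        · rw [e1, hv1]; exact hR1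
        by_cases e2 : i = x.2
        · rw [e2, hv2]; exact hR2
        rw [hv3 i e0 e1 e2]; exact hR i
      · rintro ⟨⟨g1, g2⟩, ⟨k1, k2⟩⟩ hj ⟨hg, hk⟩
        obtain ⟨hCj, hne⟩ := hS _ hj
        obtain ⟨n1, n2, n3, n4⟩ := hSab _ hj
        have hev := hSσ _ hj
        simp only [PMEv] at *
        have g12 : g1 ≠ x.2 := by
          rintro rfl
          exact n2 (hg.symm.trans hv2)
        have k12 : k1 ≠ x.2 := by
          rintro rfl
          exact n4 (hk.symm.trans hv2)
        by_cases e1 : g1 = x.1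
        · have e2 : k1 ≠ x.1 := fun h => hne (e1.trans h.symm)
          rw [hv3 k1 n3 e2 k12] at hk
          rw [e1, hv1] at hg
          apply hCx k1
          rw [hk, hg, ← e1]
          exact hsymm _ _ hCj
        · rw [hv3 g1 n1 e1 g12] at hg
          by_cases e2 : k1 = x.1
          · rw [e2, hv1] at hk
            apply hCx g1
            rw [hk, hg, ← e2]
            exact hCj
          · rw [hv3 k1 n3 e2 k12] at hk
            exact hev ⟨hg, hk⟩
      · intro p hp
        rw [hv3 p (fun h => haP (h ▸ hp)) (fun h => h1P (h ▸ hp)) (fun h => h2P (h ▸ hp))]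
        exact hPσ p hp
    · rintro ⟨σ, x1, x2⟩ hx ⟨σ', y1, y2⟩ hy h
      simp only [Gd, coe_sigma, Set.mem_sigma_iff, mem_coe, mem_filter, mem_univ, true_and, hX] at hx hy
      simp only [Prod.mk.injEq] at h
      obtain ⟨hm, rfl⟩ := h
      have q1 : (σ * c (x1, x2)) x2 = b := by
        rw [Equiv.Perm.mul_apply, hc2 (x1, x2), hx.1.2]
      have q2 : (σ' * c (x1, y2)) y2 = b := by
        rw [Equiv.Perm.mul_apply, hc2 (x1, y2), hy.1.2]
      rw [hm] at q1
      have : x2 = y2 := (σ' * c (x1, y2)).injective (q1.trans q2.symm)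
      subst this
      have : σ = σ' := mul_right_cancel hm
      subst this
      rfl
  rw [card_sigma, card_product, card_univ, Fintype.card_fin] at hcard
  have h2 : (∑ σ ∈ X.filter (fun σ => σ a = b), ((Gd σ).card : ℝ)) ≤ X.card * n := by
    exact_mod_cast hcard
  have h3 := card_nsmul_le_sum (X.filter (fun σ => σ a = b)) (fun σ => ((Gd σ).card : ℝ)) _ (fun σ _ => hGd σ)
  rw [nsmul_eq_mul] at h3
  have h4 : (ε / 4 * n * ((X.filter (fun σ => σ a = b)).card : ℝ)) * n ≤ X.card * n := by
    nlinarith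
  exact le_of_mul_le_mul_right h4 hn0

open Classical in
theorem core {n : ℕ} (ε μ : ℝ) (hε : 0 < ε) (hn : 8 ≤ ε * n) (hμ0 : 0 < μ) (hμ : μ ≤ ε / 4)
    (hμ2 : 512 * μ ≤ ε ^ 2)
    (R : Fin n → Fin n → Prop)
    (hr : ∀ a, (1 / 2 + ε) * n ≤ ((univ.filter (fun b => R a b)).card : ℝ))
    (hc : ∀ b, (1 / 2 + ε) * n ≤ ((univ.filter (fun a => R a b)).card : ℝ))
    (C : Fin n × Fin n → Fin n × Fin n → Prop) (hsymm : ∀ g h, C g h → C h g)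
    (hC : ∀ g, ((univ.filter (fun h => C g h)).card : ℝ) ≤ μ * n) :
    ∃ σ : Equiv.Perm (Fin n), (∀ i, R i (σ i)) ∧ ∀ i j, i ≠ j → ¬ C (i, σ i) (j, σ j) := by
  have hn0 : (0:ℝ) < n := by
    by_contra h
    have : (n:ℝ) = 0 := le_antisymm (not_lt.1 h) (Nat.cast_nonneg _)
    rw [this] at hn
    norm_num at hn
  have hcast : ∀ k : ℕ, (1 / 2 + ε) * n ≤ (k : ℝ) → n < 2 * k := by
    intro k hk
    have : (n : ℝ) < 2 * k := by linarith
    exact_mod_cast this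
  obtain ⟨σ0, hσ0⟩ := hall_aux R (fun a => hcast _ (hr a)) (fun b => hcast _ (hc b))
  set Ω : Finset (Equiv.Perm (Fin n)) := univ.filter (fun σ => ∀ i, R i (σ i)) with hΩ
  set F0 : Finset ((Fin n × Fin n) × (Fin n × Fin n)) :=
    univ.filter (fun i => C i.1 i.2 ∧ i.1.1 ≠ i.2.1) with hF0
  let tch : (Fin n × Fin n) × (Fin n × Fin n) → Fin n × Fin n → Prop := fun i x =>
    x.1 = i.1.1 ∨ x.1 = i.2.1 ∨ x.2 = i.1.2 ∨ x.2 = i.2.2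
  let Γ : (Fin n × Fin n) × (Fin n × Fin n) → (Fin n × Fin n) × (Fin n × Fin n) → Prop := fun i j =>
    tch i j.1 ∨ tch i j.2
  have htch : ∀ i, ((univ.filter (tch i)).card : ℝ) ≤ 4 * n := by
    intro i
    have hsub : univ.filter (tch i) ⊆
        ((({i.1.1} : Finset (Fin n)) ×ˢ univ) ∪ (({i.2.1} : Finset (Fin n)) ×ˢ univ)) ∪
        ((univ ×ˢ ({i.1.2} : Finset (Fin n))) ∪ (univ ×ˢ ({i.2.2} : Finset (Fin n)))) := by
      intro x hx
      simp only [tch, mem_filter, mem_univ, true_and, mem_union, mem_product, mem_singleton, and_true] at hx ⊢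
      tauto
    have h1 := (card_le_card hsub).trans (card_union_le _ _)
    have h2 := card_union_le ((({i.1.1} : Finset (Fin n)) ×ˢ (univ : Finset (Fin n)))) (({i.2.1} : Finset (Fin n)) ×ˢ univ)
    have h3 := card_union_le ((univ : Finset (Fin n)) ×ˢ ({i.1.2} : Finset (Fin n))) (univ ×ˢ ({i.2.2} : Finset (Fin n)))
    simp only [card_product, card_singleton, card_univ, Fintype.card_fin, one_mul, mul_one] at h2 h3
    have : (univ.filter (tch i)).card ≤ 4 * n := by omega
    exact_mod_cast this
  have hhalf : ∀ i, ((((univ.filter (tch i)).sigma (fun g => univ.filter (fun h => C g h))).card : ℕ) : ℝ) ≤ 4 * n * (μ * n) := by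
    intro i
    rw [card_sigma]
    push_cast
    refine (sum_le_card_nsmul _ _ _ (fun g _ => hC g)).trans ?_
    rw [nsmul_eq_mul]
    exact mul_le_mul_of_nonneg_right (htch i) (by positivity)
  have hd : ∀ i ∈ F0, ((F0.filter (Γ i)).card : ℝ) ≤ 8 * μ * n ^ 2 := by
    intro i _
    have hsub : F0.filter (Γ i) ⊆
      (((univ.filter (tch i)).sigma (fun g => univ.filter (fun h => C g h))).image (fun x => (x.1, x.2))) ∪
      (((univ.filter (tch i)).sigma (fun g => univ.filter (fun h => C g h))).image (fun x => (x.2, x.1))) := by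
      rintro ⟨g, h⟩ hx
      simp only [hF0, Γ, mem_filter, mem_univ, true_and] at hx
      simp only [mem_union, mem_image, mem_sigma, mem_filter, mem_univ, true_and, Sigma.exists, Prod.mk.injEq]
      rcases hx.2 with h' | h'
      · exact Or.inl ⟨g, h, ⟨h', hx.1.1⟩, rfl, rfl⟩
      · exact Or.inr ⟨h, g, ⟨h', hsymm _ _ hx.1.1⟩, rfl, rfl⟩
    have h1 := (card_le_card hsub).trans ((card_union_le _ _).trans
      (Nat.add_le_add card_image_le card_image_le))
    have h2 : ((F0.filter (Γ i)).card : ℝ) ≤ ((((univ.filter (tch i)).sigma (fun g => univ.filter (fun h => C g h))).card : ℕ) : ℝ)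
      + ((((univ.filter (tch i)).sigma (fun g => univ.filter (fun h => C g h))).card : ℕ) : ℝ) := by
      exact_mod_cast h1
    have := hhalf i
    nlinarith
  have hq : 2 ≤ ε / 4 * n := by linarith
  obtain ⟨σ, hσ, hσ2⟩ := lll Ω PMEv F0 Γ (1 / (ε / 4 * n) ^ 2) (8 * μ * n ^ 2) (by positivity)
    (by
      rw [mul_one_div, div_lt_one (by positivity)]
      nlinarith)
    (by
      rw [mul_one_div, div_mul_eq_mul_div, div_le_one (by positivity)]
      have : 512 * μ * (n:ℝ) ^ 2 ≤ ε ^ 2 * (n:ℝ)^2 := mul_le_mul_of_nonneg_right hμ2 (by positivity)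
      nlinarith)
    ⟨σ0, by simpa [hΩ] using hσ0⟩ (by intro i hi; convert hd i hi) (by
      rintro ⟨⟨a, b⟩, ⟨a', b'⟩⟩ hi S hSF hSG
      simp only [hF0, mem_filter, mem_univ, true_and] at hi
      have hS : ∀ i ∈ S, C i.1 i.2 ∧ i.1.1 ≠ i.2.1 := by
        intro i hi
        have := hSF hi
        simpa [hF0] using this
      have hS1 : ∀ i ∈ S, i.1.1 ≠ a ∧ i.1.2 ≠ b ∧ i.2.1 ≠ a ∧ i.2.2 ≠ b := by
        intro i hi
        have := hSG i hi
        simp only [Γ, tch] at this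
        tauto
      have hS2 : ∀ i ∈ S, i.1.1 ≠ a' ∧ i.1.2 ≠ b' ∧ i.2.1 ≠ a' ∧ i.2.2 ≠ b' := by
        intro i hi
        have := hSG i hi
        simp only [Γ, tch] at this
        tauto
      set X := Ω.filter (fun w => ∀ j ∈ S, ¬ PMEv j w) with hX
      have s1 := switch ε μ hε (by linarith) hμ R hr hc C hsymm hC a' b' ∅ (by simp) (by simp) id S hS hS2 X
        (by intro σ; simp [hX, hΩ])
      have s2 := switch ε μ hε (by linarith) hμ R hr hc C hsymm hC a b {a'} (by simp) (by simpa using hi.2)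
        (fun _ => b') S hS hS1 (X.filter (fun σ => σ a' = b'))
        (by intro σ; simp [hX, hΩ, and_assoc])
      have he : X.filter (PMEv ((a, b), (a', b'))) = (X.filter (fun σ => σ a' = b')).filter (fun σ => σ a = b) := by
        ext σ
        simp only [mem_filter, PMEv]
        tauto
      have fin : ((X.filter (PMEv ((a, b), (a', b')))).card : ℝ) ≤ 1 / (ε / 4 * n) ^ 2 * X.card := by
        rw [he, one_div, ← div_eq_inv_mul, le_div_iff₀ (by positivity)]
        have := mul_le_mul_of_nonneg_left s2 (by linarith : 0 ≤ ε / 4 * n)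
        nlinarith
      convert fin)
  refine ⟨σ, by simpa [hΩ] using hσ, ?_⟩
  intro i j hij hCij
  exact hσ2 ((i, σ i), (j, σ j)) (by simp [hF0, hCij, hij]) ⟨rfl, rfl⟩

/-- For every ε > 0 there exist μ > 0 and n₀ such that for every n ≥ n₀:
if G is a balanced bipartite graph on 2n vertices with minimum degree at least (1/2 + ε)n,
then for every μn-bounded system of conflicts F for E(G) (a set of unordered pairs of
edges of G, each edge lying in at most μn conflicts) there exists a perfect matching of G
that is F-conflict-free. -/
theorem conflict_free_PM :
    ∀ ε : ℝ, 0 < ε →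
    ∃ μ : ℝ, 0 < μ ∧ ∃ n₀ : ℕ, ∀ n : ℕ, n₀ ≤ n →
      ∀ (V : Type) [Fintype V] (G : SimpleGraph V) (A B : Set V),
        A ∪ B = Set.univ → Disjoint A B → A.ncard = n → B.ncard = n →
        (∀ u v : V, G.Adj u v → (u ∈ A ∧ v ∈ B) ∨ (u ∈ B ∧ v ∈ A)) →
        (∀ v : V, (1 / 2 + ε) * n ≤ ((G.neighborSet v).ncard : ℝ)) →
        ∀ F : Set (Sym2 (Sym2 V)),
          (∀ p ∈ F, ∀ e ∈ p, e ∈ G.edgeSet) →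
          (∀ e ∈ G.edgeSet, (({f : Sym2 V | s(e, f) ∈ F}).ncard : ℝ) ≤ μ * n) →
          ∃ M : G.Subgraph, M.IsPerfectMatching ∧
            ∀ e ∈ M.edgeSet, ∀ f ∈ M.edgeSet, e ≠ f → s(e, f) ∉ F := by
  classical
  intro ε hε
  refine ⟨min (ε / 4) (ε ^ 2 / 512), lt_min (by positivity) (by positivity), ⌈8 / ε⌉₊, ?_⟩
  set μ := min (ε / 4) (ε ^ 2 / 512) with hμdef
  have hμ0 : 0 < μ := lt_min (by positivity) (by positivity)
  have hμ1 : μ ≤ ε / 4 := min_le_left _ _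
  have hμ2 : 512 * μ ≤ ε ^ 2 := by
    have : μ ≤ ε ^ 2 / 512 := min_le_right _ _
    linarith
  intro n hn V _ G A B hAB hdis hA hB hbip hdeg F hF hFb
  have hn8 : 8 ≤ ε * n := by
    have h1 : 8 / ε ≤ (n : ℝ) := (Nat.le_ceil _).trans (by exact_mod_cast hn)
    rw [div_le_iff₀ hε] at h1
    linarith
  let eA : Fin n ≃ A := (Finite.equivFinOfCardEq (by rw [Nat.card_coe_set_eq, hA])).symm
  let eB : Fin n ≃ B := (Finite.equivFinOfCardEq (by rw [Nat.card_coe_set_eq, hB])).symm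
  let fA : Fin n → V := fun i => (eA i : V)
  let fB : Fin n → V := fun i => (eB i : V)
  have fAinj : Function.Injective fA := Subtype.val_injective.comp eA.injective
  have fBinj : Function.Injective fB := Subtype.val_injective.comp eB.injective
  have fAm : ∀ i, fA i ∈ A := fun i => (eA i).2
  have fBm : ∀ i, fB i ∈ B := fun i => (eB i).2
  have fAs : ∀ v ∈ A, ∃ i, fA i = v := fun v hv => ⟨eA.symm ⟨v, hv⟩, by simp [fA]⟩
  have fBs : ∀ v ∈ B, ∃ i, fB i = v := fun v hv => ⟨eB.symm ⟨v, hv⟩, by simp [fB]⟩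
  have hnot : ∀ v, v ∈ A → v ∈ B → False := fun v h1 h2 => Set.disjoint_left.1 hdis h1 h2
  have fAB : ∀ i j, fA i ≠ fB j := fun i j h => hnot _ (fAm i) (h ▸ fBm j)
  let ed : Fin n × Fin n → Sym2 V := fun g => s(fA g.1, fB g.2)
  have edinj : Function.Injective ed := by
    rintro ⟨i, j⟩ ⟨k, l⟩ h
    simp only [ed, Sym2.eq_iff] at h
    rcases h with ⟨h1, h2⟩ | ⟨h1, h2⟩
    · rw [fAinj h1, fBinj h2]
    · exact absurd h1 (fAB _ _)
  obtain ⟨σ, hσR, hσC⟩ := core ε μ hε hn8 hμ0 hμ1 hμ2 (fun i j => G.Adj (fA i) (fB j))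
    (by
      intro i
      refine (hdeg (fA i)).trans ?_
      norm_cast
      have : G.neighborSet (fA i) ⊆ ((univ.filter (fun j => G.Adj (fA i) (fB j))).image fB : Finset V) := by
        intro v hv
        have hv' : G.Adj (fA i) v := hv
        have hvB : v ∈ B := by
          rcases hbip _ _ hv' with h | h
          · exact h.2
          · exact (hnot _ (fAm i) h.1).elim
        obtain ⟨j, rfl⟩ := fBs v hvB
        simp only [coe_image, Set.mem_image, mem_coe, mem_filter, mem_univ, true_and]
        exact ⟨j, hv', rfl⟩
      refine (Set.ncard_le_ncard this (Finset.finite_toSet _)).trans ?_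
      rw [Set.ncard_coe_finset]
      refine card_image_le.trans (le_of_eq ?_)
      congr)
    (by
      intro i
      refine (hdeg (fB i)).trans ?_
      norm_cast
      have : G.neighborSet (fB i) ⊆ ((univ.filter (fun j => G.Adj (fA j) (fB i))).image fA : Finset V) := by
        intro v hv
        have hv' : G.Adj (fB i) v := hv
        have hvA : v ∈ A := by
          rcases hbip _ _ hv' with h | h
          · exact (hnot _ h.1 (fBm i)).elim
          · exact h.2
        obtain ⟨j, rfl⟩ := fAs v hvA
        simp only [coe_image, Set.mem_image, mem_coe, mem_filter, mem_univ, true_and]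
        exact ⟨j, hv'.symm, rfl⟩
      refine (Set.ncard_le_ncard this (Finset.finite_toSet _)).trans ?_
      rw [Set.ncard_coe_finset]
      refine card_image_le.trans (le_of_eq ?_)
      congr)
    (fun g h => s(ed g, ed h) ∈ F)
    (by
      intro g h hgh
      rw [Sym2.eq_swap]
      exact hgh)
    (by
      intro g
      by_cases hg : ed g ∈ G.edgeSet
      · refine le_trans ?_ (hFb _ hg)
        norm_cast
        rw [← Set.ncard_coe_finset]
        refine Set.ncard_le_ncard_of_injOn ed ?_ edinj.injOn (Set.toFinite _)
        intro h hh
        simpa using hh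
      · rw [filter_false_of_mem]
        · simp only [card_empty, Nat.cast_zero]
          positivity
        · intro h _ hh
          exact hg (hF _ hh _ (Sym2.mem_mk_left _ _)))
  let M : G.Subgraph :=
    { verts := Set.univ
      Adj := fun u v => ∃ i, (u = fA i ∧ v = fB (σ i)) ∨ (v = fA i ∧ u = fB (σ i))
      adj_sub := by
        rintro u v ⟨i, ⟨rfl, rfl⟩ | ⟨rfl, rfl⟩⟩
        · exact hσR i
        · exact (hσR i).symm
      edge_vert := fun _ => Set.mem_univ _
      symm := by
        constructor
        rintro u v ⟨i, h⟩
        exact ⟨i, h.symm⟩ }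
  have hMe : ∀ e ∈ M.edgeSet, ∃ i, e = ed (i, σ i) := by
    intro e
    induction e using Sym2.ind with
    | _ u v =>
      intro h
      rw [SimpleGraph.Subgraph.mem_edgeSet] at h
      obtain ⟨i, ⟨rfl, rfl⟩ | ⟨rfl, rfl⟩⟩ := h
      · exact ⟨i, rfl⟩
      · exact ⟨i, Sym2.eq_swap⟩
  refine ⟨M, ⟨?_, fun _ => Set.mem_univ _⟩, ?_⟩
  · intro v _
    have hv : v ∈ A ∪ B := hAB ▸ Set.mem_univ v
    rcases hv with hv | hv
    · obtain ⟨i, rfl⟩ := fAs v hv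
      refine ⟨fB (σ i), ⟨i, Or.inl ⟨rfl, rfl⟩⟩, ?_⟩
      rintro w ⟨j, ⟨h1, rfl⟩ | ⟨_, h2⟩⟩
      · rw [fAinj h1]
      · exact absurd h2 (fAB _ _)
    · obtain ⟨i, rfl⟩ := fBs v hv
      refine ⟨fA (σ.symm i), ⟨σ.symm i, Or.inr ⟨rfl, by simp⟩⟩, ?_⟩
      rintro w ⟨j, ⟨h1, _⟩ | ⟨rfl, h2⟩⟩
      · exact absurd h1.symm (fAB _ _)
      · rw [fBinj h2, Equiv.symm_apply_apply]
  · intro e he f hf hef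
    obtain ⟨i, rfl⟩ := hMe e he
    obtain ⟨j, rfl⟩ := hMe f hf
    refine hσC i j ?_
    rintro rfl
    exact hef rfl
end
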